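/- arXiv:2110.14948 — 4 statements merged into one kernel-verified Lean document; each statement's English description precedes it below -/
import Mathlib

section
/- Let U be a finite set with |U| = n and w : U → (0,∞) a positive weight function with total weight W = Σ_{a∈U} w(a). Let a₁, …, a_m be i.i.d. proportional samples from U and for i ≠ j set Y_{ij} = 1/w(a_i) if a_i = a_j and Y_{ij} = 0 otherwise. Then for any pair of distinct indices i, j: E[Y_{ij}] = 1/W and Var(Y_{ij}) ≤ n/W². -/
open MeasureTheory ProbabilityTheory

/-!
The samples are not assumed measurable, and the masses in their joint law are a priori outer
measures. But these masses sum to one, so no mass is lost between the fibres, every fibre is null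
measurable, and the samples are honestly i.i.d. with law `ν {x} = w x / W`.

Integrating over the diagonal of `U × U` with Fubini turns the moments of `Y_{ij}` into
`E[Y_{ij} ^ k] = ∫ ν {x} * w x ^ (-k) dν(x)`. The integrand is the constant `1 / W` for `k = 1`, and
each of the `n` points contributes `1 / W ^ 2` for `k = 2`, so that `Var(Y_{ij}) = (n - 1) / W ^ 2`.
-/

section LawOfCountableValuedMap

variable {Ω V : Type*} [MeasurableSpace Ω] {μ : Measure Ω} [IsFiniteMeasure μ]

theorem nullMeasurableSet_of_measure_add_measure_compl_le {s : Set Ω}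
    (h : μ s + μ sᶜ ≤ μ Set.univ) : NullMeasurableSet s μ := by
  have hsub : (toMeasurable μ sᶜ)ᶜ ⊆ s := Set.compl_subset_comm.1 (subset_toMeasurable μ sᶜ)
  have hmeas : MeasurableSet (toMeasurable μ sᶜ)ᶜ := (measurableSet_toMeasurable μ sᶜ).compl
  have hle : μ s ≤ μ (toMeasurable μ sᶜ)ᶜ := by
    rw [measure_compl (measurableSet_toMeasurable μ sᶜ) (measure_ne_top _ _),
      measure_toMeasurable]
    exact ENNReal.le_sub_of_add_le_right (measure_ne_top _ _) h
  exact hmeas.nullMeasurableSet.congr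
    (ae_eq_of_subset_of_measure_ge hsub hle hmeas.nullMeasurableSet (measure_ne_top _ _))

variable [Countable V] [MeasurableSpace V] {X : Ω → V}

theorem aemeasurable_of_tsum_measure_fiber_le (h : ∑' v, μ (X ⁻¹' {v}) ≤ μ Set.univ) :
    AEMeasurable X μ := by
  classical
  have hfiber (v : V) : NullMeasurableSet (X ⁻¹' {v}) μ := by
    apply nullMeasurableSet_of_measure_add_measure_compl_le
    calc μ (X ⁻¹' {v}) + μ (X ⁻¹' {v})ᶜ
        ≤ μ (X ⁻¹' {v}) + ∑' u, μ (if u = v then ∅ else X ⁻¹' {u}) := by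
          gcongr
          exact (measure_mono fun ω hω => Set.mem_iUnion.2 ⟨X ω, by simpa using hω⟩).trans
            (measure_iUnion_le _)
      _ = ∑' u, μ (X ⁻¹' {u}) := by
          simp only [apply_ite μ, measure_empty]
          exact (ENNReal.tsum_eq_add_tsum_ite (f := fun u => μ (X ⁻¹' {u})) v).symm
      _ ≤ μ Set.univ := h
  refine NullMeasurable.aemeasurable fun s _ => ?_
  rw [← Set.biUnion_preimage_singleton]
  exact .biUnion s.to_countable fun v _ => hfiber v

theorem hasLaw_of_measure_fiber_eq [MeasurableSingletonClass V] {ν : Measure V}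
    (huniv : ν Set.univ ≤ μ Set.univ) (hfiber : ∀ v, μ (X ⁻¹' {v}) = ν {v}) : HasLaw X ν μ := by
  have htotal : ∑' v, ν {v} = ν Set.univ := by
    simpa using (lintegral_countable' (μ := ν) 1).symm
  have hX : AEMeasurable X μ := aemeasurable_of_tsum_measure_fiber_le <| by
    simpa only [hfiber, htotal] using huniv
  refine ⟨hX, Measure.ext_of_singleton fun v => ?_⟩
  rw [Measure.map_apply_of_aemeasurable hX (measurableSet_singleton v), hfiber]

end LawOfCountableValuedMap

theorem hasLaw_prodMk_of_hasLaw_pi {Ω ι : Type*} [MeasurableSpace Ω] {μ : Measure Ω} [Fintype ι]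
    {E : ι → Type*} [∀ i, MeasurableSpace (E i)] {ν : ∀ i, Measure (E i)}
    [∀ i, IsProbabilityMeasure (ν i)] {X : ∀ i, Ω → E i}
    (hX : HasLaw (fun ω i => X i ω) (Measure.pi ν) μ) {i j : ι} (hij : i ≠ j) :
    HasLaw (fun ω => (X i ω, X j ω)) ((ν i).prod (ν j)) μ := by
  have := hX.isProbabilityMeasure
  have hlaw (k : ι) : HasLaw (X k) (ν k) μ := (measurePreserving_eval ν k).fun_comp_hasLaw hX
  exact (((iIndepFun_iff_hasLaw_pi_pi hlaw).2 hX).indepFun hij).hasLaw_prod (hlaw i) (hlaw j)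

theorem integral_prod_ite_fst_eq_snd {U E : Type*} [MeasurableSpace U] [MeasurableSingletonClass U]
    [DecidableEq U] [NormedAddCommGroup E] [NormedSpace ℝ E] [CompleteSpace E]
    {μ ν : Measure U} [SFinite μ] [SFinite ν] {g : U → E}
    (hg : Integrable (fun z : U × U => if z.1 = z.2 then g z.1 else 0) (μ.prod ν)) :
    ∫ z, (if z.1 = z.2 then g z.1 else 0) ∂μ.prod ν = ∫ x, ν.real {x} • g x ∂μ := by
  rw [integral_prod _ hg]
  congr with x
  rw [← integral_indicator_const _ (measurableSet_singleton x)]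
  simp only [Set.indicator_apply, Set.mem_singleton_iff, eq_comm]

/-- The estimator `Y_{ij}` of `1 / ∑ x, w x`, as a function of the pair of samples `(a_i, a_j)`. -/
noncomputable def pairEstimator {U : Type*} [DecidableEq U] (w : U → ℝ) (z : U × U) : ℝ :=
  if z.1 = z.2 then (w z.1)⁻¹ else 0

section ProportionalSampling

variable {U : Type*} [Fintype U]

/-- The law of a proportional sample for nonnegative weights `w`: the point `x` has mass
`w x / ∑ y, w y`. If all weights vanish, division by zero makes it the zero measure. -/
noncomputable def proportionalMeasure [MeasurableSpace U] (w : U → ℝ) : Measure U :=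
  ∑ x, ENNReal.ofReal (w x / ∑ y, w y) • Measure.dirac x

variable [MeasurableSpace U] {w : U → ℝ}

theorem isProbabilityMeasure_proportionalMeasure (hw : ∀ x, 0 ≤ w x) (hW : ∑ x, w x ≠ 0) :
    IsProbabilityMeasure (proportionalMeasure w) where
  measure_univ := by
    have hnonneg (x : U) : 0 ≤ w x / ∑ y, w y :=
      div_nonneg (hw x) (Finset.sum_nonneg fun y _ => hw y)
    simp [proportionalMeasure, ← ENNReal.ofReal_sum_of_nonneg fun x _ => hnonneg x,
      ← Finset.sum_div, div_self hW]

theorem isProbabilityMeasure_proportionalMeasure_of_pos [Nonempty U] (hw : ∀ x, 0 < w x) :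
    IsProbabilityMeasure (proportionalMeasure w) :=
  isProbabilityMeasure_proportionalMeasure (fun x => (hw x).le)
    (Finset.sum_pos (fun x _ => hw x) Finset.univ_nonempty).ne'

variable [MeasurableSingletonClass U]

theorem proportionalMeasure_singleton (w : U → ℝ) (x : U) :
    proportionalMeasure w {x} = ENNReal.ofReal (w x / ∑ y, w y) := by
  classical
  simp [proportionalMeasure, Set.indicator_apply]

theorem measureReal_proportionalMeasure_singleton (hw : ∀ x, 0 ≤ w x) (x : U) :
    (proportionalMeasure w).real {x} = w x / ∑ y, w y := by
  rw [measureReal_def, proportionalMeasure_singleton,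
    ENNReal.toReal_ofReal (div_nonneg (hw x) (Finset.sum_nonneg fun y _ => hw y))]

variable [Nonempty U] [DecidableEq U]

theorem integral_pairEstimator (hw : ∀ x, 0 < w x) :
    ∫ z, pairEstimator w z ∂(proportionalMeasure w).prod (proportionalMeasure w)
      = (∑ x, w x)⁻¹ := by
  have := isProbabilityMeasure_proportionalMeasure_of_pos hw
  calc ∫ z, pairEstimator w z ∂(proportionalMeasure w).prod (proportionalMeasure w)
      = ∫ x, (proportionalMeasure w).real {x} • (w x)⁻¹ ∂proportionalMeasure w :=
        integral_prod_ite_fst_eq_snd (g := fun x => (w x)⁻¹) .of_finite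
    _ = ∫ _, (∑ y, w y)⁻¹ ∂proportionalMeasure w := by
        congr with x
        rw [measureReal_proportionalMeasure_singleton fun x => (hw x).le, smul_eq_mul,
          div_mul_eq_mul_div, mul_inv_cancel₀ (hw x).ne', one_div]
    _ = (∑ x, w x)⁻¹ := by simp

theorem integral_pairEstimator_sq (hw : ∀ x, 0 < w x) :
    ∫ z, pairEstimator w z ^ 2 ∂(proportionalMeasure w).prod (proportionalMeasure w)
      = Fintype.card U / (∑ x, w x) ^ 2 := by
  have := isProbabilityMeasure_proportionalMeasure_of_pos hw
  calc ∫ z, pairEstimator w z ^ 2 ∂(proportionalMeasure w).prod (proportionalMeasure w)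
      = ∫ x, (proportionalMeasure w).real {x} • (w x)⁻¹ ^ 2 ∂proportionalMeasure w := by
        simp only [pairEstimator, ite_pow, zero_pow two_ne_zero]
        exact integral_prod_ite_fst_eq_snd (g := fun x => (w x)⁻¹ ^ 2) .of_finite
    _ = ∑ x, (w x / ∑ y, w y) • (w x / ∑ y, w y) • (w x)⁻¹ ^ 2 := by
        rw [integral_fintype .of_finite]
        simp only [measureReal_proportionalMeasure_singleton fun x => (hw x).le]
    _ = ∑ _ : U, 1 / (∑ y, w y) ^ 2 := by
        refine Finset.sum_congr rfl fun x _ => ?_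
        have := (hw x).ne'
        simp only [smul_eq_mul]
        field_simp
    _ = Fintype.card U / (∑ x, w x) ^ 2 := by simp [div_eq_mul_inv]

theorem variance_pairEstimator (hw : ∀ x, 0 < w x) :
    variance (pairEstimator w) ((proportionalMeasure w).prod (proportionalMeasure w))
      = (Fintype.card U - 1) / (∑ x, w x) ^ 2 := by
  have := isProbabilityMeasure_proportionalMeasure_of_pos hw
  rw [variance_eq_sub .of_discrete, integral_pairEstimator hw]
  simp only [Pi.pow_apply, integral_pairEstimator_sq hw, inv_pow, sub_div, one_div]

end ProportionalSampling

/-- For i.i.d. proportional samples `a₁, …, a_m` from a finite weighted set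
`(U, w)` with total weight `W`, and `Y_{ij} = 1/w(a_i)` if `a_i = a_j`, `0` otherwise
(`i ≠ j`), one has `E[Y_{ij}] = 1/W` and `Var(Y_{ij}) ≤ n/W²`. -/
theorem expectation_variance_pair_estimator
    {Ω U : Type*} [MeasurableSpace Ω] (μ : Measure Ω) [IsProbabilityMeasure μ]
    [Fintype U] [DecidableEq U]
    (n : ℕ) (hn : Fintype.card U = n)
    (w : U → ℝ) (hw : ∀ x, 0 < w x)
    (W : ℝ) (hW : W = ∑ x, w x)
    (m : ℕ) (a : Fin m → Ω → U)
    (hlaw : ∀ v : Fin m → U,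
      μ {ω | ∀ i, a i ω = v i} = ∏ i, ENNReal.ofReal (w (v i) / W))
    (i j : Fin m) (hij : i ≠ j)
    (Y : Ω → ℝ)
    (hY : ∀ ω, Y ω = if a i ω = a j ω then (w (a i ω))⁻¹ else 0) :
    ∫ ω, Y ω ∂μ = W⁻¹ ∧ variance Y μ ≤ n / W ^ 2 := by
  subst hn hW
  let _ : MeasurableSpace U := ⊤
  have : Nonempty U := μ.nonempty_of_neZero.map (a i)
  have := isProbabilityMeasure_proportionalMeasure_of_pos hw
  have hsamples : HasLaw (fun ω k => a k ω) (.pi fun _ => proportionalMeasure w) μ :=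
    hasLaw_of_measure_fiber_eq (by simp) fun v => by
      simpa [Set.preimage, funext_iff, proportionalMeasure_singleton] using hlaw v
  have hpair := hasLaw_prodMk_of_hasLaw_pi hsamples hij
  obtain rfl : Y = pairEstimator w ∘ fun ω => (a i ω, a j ω) := funext hY
  constructor
  · rw [hpair.integral_comp .of_discrete, integral_pairEstimator hw]
  · rw [← variance_map Measurable.of_discrete.aemeasurable hpair.aemeasurable, hpair.map_eq,
      variance_pairEstimator hw]
    gcongr
    exact sub_le_self _ zero_le_one
end

section
/- Let U be a finite set with |U| = n and w : U → (0,∞) a positive weight function with total weight W = Σ_{a∈U} w(a). Let 0 < ε < 1 and ñ ≥ n, and let m be an integer with m ≥ √(24·ñ)/ε + 1. Let a₁, …, a_m be i.i.d. proportional samples and define the estimate Ŵ = C(m,2) · (Σ_{1 ≤ i < j ≤ m} Y_{ij})^{-1}, where Y_{ij} = 1/w(a_i) if a_i = a_j and Y_{ij} = 0 otherwise (with Ŵ = ∞ if the sum is zero). Then P(|Ŵ − W| ≤ ε·W) ≥ 2/3. -/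
open MeasureTheory ProbabilityTheory

/-!
Given one sample of a colliding pair `i ≠ j`, the other one collides with it with probability
`w / W`, so the weight `1 / w` makes the conditional mean of `Y i j` the constant `1 / W`. Hence
all the `Y i j` have mean `1 / W`, and distinct pairs are uncorrelated even when they share a
sample. As the second moment of `Y i j` is `n / W²`, the sum over `C` pairs has mean `C / W` and
variance at most `C n / W²`, and Chebyshev's inequality bounds the failure probability by
`4 n / (ε² C)`.
-/

section ProductMeasure

variable {ι : Type*} [Fintype ι] [DecidableEq ι] {X : ι → Type*} [∀ i, MeasurableSpace (X i)]
  (μ : ∀ i, Measure (X i)) [∀ i, IsProbabilityMeasure (μ i)]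

lemma measurePreserving_update_pi (i : ι) :
    MeasurePreserving (fun q : (∀ j, X j) × X i ↦ Function.update q.1 i q.2)
      ((Measure.pi μ).prod (μ i)) (Measure.pi μ) := by
  refine ⟨measurable_update', (Measure.pi_eq fun s hs ↦ ?_).symm⟩
  have preimage_box : (fun q : (∀ j, X j) × X i ↦ Function.update q.1 i q.2) ⁻¹' Set.univ.pi s =
      Set.univ.pi (Function.update s i Set.univ) ×ˢ s i := by
    ext ⟨v, x⟩
    simp only [Set.mem_preimage, Set.mem_prod, Set.mem_univ_pi, Function.forall_update_iff _
      (fun j y ↦ y ∈ s j), Function.forall_update_iff _ (fun j t ↦ v j ∈ t), Set.mem_univ, true_and]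
    exact and_comm
  rw [Measure.map_apply measurable_update' (.univ_pi hs), preimage_box, Measure.prod_prod,
    Measure.pi_pi, ← Finset.prod_erase_mul _ _ (Finset.mem_univ i),
    ← Finset.prod_erase_mul _ (fun j ↦ μ j (s j)) (Finset.mem_univ i), Function.update_self,
    measure_univ, mul_one]
  congr 1
  exact Finset.prod_congr rfl fun j hj ↦ by rw [Function.update_of_ne (Finset.ne_of_mem_erase hj)]

variable {μ} {i : ι}

lemma integral_pi_eq_integral_integral_update {E : Type*} [NormedAddCommGroup E] [NormedSpace ℝ E]
    {f : (∀ j, X j) → E} (hf : Integrable f (Measure.pi μ)) :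
    ∫ v, f v ∂Measure.pi μ = ∫ v, ∫ x, f (Function.update v i x) ∂μ i ∂Measure.pi μ := by
  have resample := measurePreserving_update_pi μ i
  calc ∫ v, f v ∂Measure.pi μ
      = ∫ q, f (Function.update q.1 i q.2) ∂(Measure.pi μ).prod (μ i) := by
        conv_lhs => rw [← resample.map_eq]
        exact integral_map resample.aemeasurable (resample.map_eq.symm ▸ hf.aestronglyMeasurable)
    _ = _ := integral_prod _ (resample.integrable_comp_of_integrable hf)

lemma integral_pi_eq_of_integral_update_eq_const {f : (∀ j, X j) → ℝ} {c : ℝ}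
    (hf : Integrable f (Measure.pi μ)) (hfc : ∀ v, ∫ x, f (Function.update v i x) ∂μ i = c) :
    ∫ v, f v ∂Measure.pi μ = c := by
  simp [integral_pi_eq_integral_integral_update (i := i) hf, hfc]

lemma covariance_pi_eq_zero_of_integral_update_eq_const {f g : (∀ j, X j) → ℝ} {c : ℝ}
    (hf : MemLp f 2 (Measure.pi μ)) (hg : MemLp g 2 (Measure.pi μ))
    (hfc : ∀ v, ∫ x, f (Function.update v i x) ∂μ i = c)
    (hgi : ∀ v x, g (Function.update v i x) = g v) :
    cov[f, g; Measure.pi μ] = 0 := by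
  have mean_f : ∫ v, f v ∂Measure.pi μ = c :=
    integral_pi_eq_of_integral_update_eq_const (hf.integrable one_le_two) hfc
  have mean_mul : ∫ v, (f * g) v ∂Measure.pi μ = c * ∫ v, g v ∂Measure.pi μ := by
    rw [integral_pi_eq_integral_integral_update (i := i) (hf.integrable_mul hg)]
    simp only [Pi.mul_apply, hgi, integral_mul_const, hfc, integral_const_mul]
  rw [covariance_eq_sub hf hg, mean_mul, mean_f, sub_self]

end ProductMeasure

lemma variance_fun_sum_of_pairwise_covariance_eq_zero {Ω κ : Type*} [MeasurableSpace Ω]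
    {μ : Measure Ω} [IsFiniteMeasure μ] {s : Finset κ} {X : κ → Ω → ℝ}
    (hX : ∀ p ∈ s, MemLp (X p) 2 μ)
    (hcov : (s : Set κ).Pairwise fun p q ↦ cov[X p, X q; μ] = 0) :
    Var[fun ω ↦ ∑ p ∈ s, X p ω; μ] = ∑ p ∈ s, Var[X p; μ] := by
  rw [variance_fun_sum' hX]
  refine Finset.sum_congr rfl fun p hp ↦ ?_
  rw [Finset.sum_eq_single_of_mem p hp fun q hq hqp ↦ hcov hp hq hqp.symm,
    covariance_self (hX p hp).aemeasurable]

-- Fibres of `X` need not be measurable: subadditivity on the complement of `S` is enough.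
lemma measure_le_measure_preimage_of_fiber_le {Ω V : Type*} [MeasurableSpace Ω] [Countable V]
    [MeasurableSpace V] [MeasurableSingletonClass V] {μ : Measure Ω} [IsProbabilityMeasure μ]
    {ν : Measure V} [IsProbabilityMeasure ν] {X : Ω → V} (hX : ∀ v, μ (X ⁻¹' {v}) ≤ ν {v})
    (S : Set V) : ν S ≤ μ (X ⁻¹' S) := by
  have hcompl : μ (X ⁻¹' Sᶜ) ≤ ν Sᶜ :=
    calc μ (X ⁻¹' Sᶜ) = μ (⋃ v ∈ Sᶜ, X ⁻¹' {v}) := by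
          rw [← Set.preimage_iUnion₂, Set.biUnion_of_singleton]
      _ ≤ ∑' v : ↥Sᶜ, μ (X ⁻¹' {v.1}) := measure_biUnion_le _ (Set.to_countable _) _
      _ ≤ ∑' v : ↥Sᶜ, ν {v.1} := ENNReal.tsum_le_tsum fun v ↦ hX v
      _ = ν Sᶜ := by
          rw [← measure_biUnion (Set.to_countable _)
            (fun _ _ _ _ h ↦ Set.disjoint_singleton.2 h) (fun _ _ ↦ measurableSet_singleton _),
            Set.biUnion_of_singleton]
  refine (ENNReal.add_le_add_iff_right (measure_ne_top ν Sᶜ)).1 ?_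
  calc ν S + ν Sᶜ = 1 := by
        rw [measure_add_measure_compl (Set.to_countable S).measurableSet, measure_univ]
    _ = μ (X ⁻¹' S ∪ X ⁻¹' Sᶜ) := by rw [← Set.preimage_union]; simp
    _ ≤ μ (X ⁻¹' S) + ν Sᶜ := (measure_union_le _ _).trans (by gcongr)

lemma card_filter_fst_lt_snd (ι : Type*) [Fintype ι] [LinearOrder ι] :
    ({p : ι × ι | p.1 < p.2} : Finset _).card = (Fintype.card ι).choose 2 := by
  have card_swap : ({p : ι × ι | p.2 < p.1} : Finset _).card =
      ({p : ι × ι | p.1 < p.2} : Finset _).card :=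
    Finset.card_equiv (Equiv.prodComm ι ι) (by simp)
  have offDiag_eq : (Finset.univ : Finset ι).offDiag =
      ({p : ι × ι | p.1 < p.2} : Finset _) ∪ ({p : ι × ι | p.2 < p.1} : Finset _) := by
    ext p
    simp
  have card_offDiag := Finset.offDiag_card (Finset.univ : Finset ι)
  rw [offDiag_eq, Finset.card_union_of_disjoint, card_swap, Finset.card_univ] at card_offDiag
  · rw [Nat.choose_two_right, Nat.mul_sub_one]
    lia
  · exact Finset.disjoint_filter.2 fun p _ h ↦ h.asymm

lemma sum_filter_fst_lt_snd {ι M : Type*} [Fintype ι] [LinearOrder ι] [LocallyFiniteOrderTop ι]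
    [AddCommMonoid M] (f : ι → ι → M) :
    ∑ p : ι × ι with p.1 < p.2, f p.1 p.2 = ∑ i, ∑ j ∈ Finset.Ioi i, f i j := by
  rw [Finset.sum_filter, Fintype.sum_prod_type]
  refine Finset.sum_congr rfl fun i _ ↦ ?_
  rw [← Finset.sum_filter, Finset.filter_lt_eq_Ioi]

lemma abs_mul_inv_sub_le_of_abs_sub_mul_inv_le {C S W ε : ℝ}
    (hC : 0 < C) (hW : 0 < W) (hε0 : 0 ≤ ε) (hε1 : ε ≤ 1)
    (h : |S - C * W⁻¹| ≤ ε * C / (2 * W)) : |C * S⁻¹ - W| ≤ ε * W := by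
  have rescale : S - C * W⁻¹ = (S * W - C) / W := by field_simp
  have hSW : |S * W - C| ≤ ε * C / 2 := by
    rw [rescale, abs_div, abs_of_pos hW, div_le_iff₀ hW] at h
    exact h.trans_eq (by field_simp)
  obtain ⟨lower, upper⟩ := abs_le.1 hSW
  have hS : 0 < S := pos_of_mul_pos_left (b := W) (by nlinarith) hW.le
  rw [← div_eq_mul_inv, abs_le, le_sub_iff_add_le, sub_le_iff_le_add, div_le_iff₀ hS,
    le_div_iff₀ hS]
  constructor
  · calc (-(ε * W) + W) * S = (1 - ε) * (S * W) := by ring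
      _ ≤ (1 - ε) * ((1 + ε / 2) * C) :=
        mul_le_mul_of_nonneg_left (by linarith) (sub_nonneg.2 hε1)
      _ = C - (ε + ε ^ 2) / 2 * C := by ring
      _ ≤ C := sub_le_self _ (by positivity)
  · calc C ≤ C + ε * (1 - ε) / 2 * C := by
          have := sub_nonneg.2 hε1
          exact le_add_of_nonneg_right (by positivity)
      _ = (1 + ε) * ((1 - ε / 2) * C) := by ring
      _ ≤ (1 + ε) * (S * W) := mul_le_mul_of_nonneg_left (by linarith) (by positivity)
      _ = (ε * W + W) * S := by ring

lemma mul_le_sq_mul_choose_two {x ε : ℝ} {m : ℕ} (hx : 0 ≤ x) (hε : 0 < ε)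
    (hm : √(24 * x) / ε + 1 ≤ m) : 12 * x ≤ ε ^ 2 * m.choose 2 := by
  have hm1 : (1 : ℝ) ≤ m := (le_add_of_nonneg_left (by positivity)).trans hm
  have hsqrt : √(24 * x) ≤ (m - 1) * ε := by
    rw [← div_le_iff₀ hε]
    linarith
  calc 12 * x = √(24 * x) ^ 2 / 2 := by rw [Real.sq_sqrt (by positivity)]; ring
    _ ≤ ((m - 1) * ε) ^ 2 / 2 := by gcongr
    _ = ε ^ 2 * ((m - 1) * (m - 1) / 2) := by ring
    _ ≤ ε ^ 2 * (m * (m - 1) / 2) := by gcongr; linarith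
    _ = ε ^ 2 * m.choose 2 := by rw [Nat.cast_choose_two]

section Collisions

variable {ι U : Type*} [DecidableEq U]

/-- The variable `Y i j` of the estimator: `1 / w` at a collision of the samples `i` and `j`,
and `0` if they differ. -/
noncomputable def weightedCollision (w : U → ℝ) (i j : ι) (v : ι → U) : ℝ :=
  if v i = v j then (w (v i))⁻¹ else 0

/-- The total collision weight over a set `T` of pairs of samples; the estimator of `∑ x, w x`
is `T.card * (collisionSum w T v)⁻¹`, where `T` consists of all pairs `i < j`. -/
noncomputable def collisionSum (w : U → ℝ) (T : Finset (ι × ι)) (v : ι → U) : ℝ :=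
  ∑ p ∈ T, weightedCollision w p.1 p.2 v

lemma weightedCollision_comm (w : U → ℝ) (i j : ι) :
    weightedCollision w i j = weightedCollision w j i := by
  ext v
  unfold weightedCollision
  split_ifs <;> simp_all

lemma collisionSum_filter_fst_lt_snd [Fintype ι] [LinearOrder ι] [LocallyFiniteOrderTop ι]
    (w : U → ℝ) (v : ι → U) :
    collisionSum w {p | p.1 < p.2} v = ∑ i, ∑ j ∈ Finset.Ioi i, weightedCollision w i j v :=
  sum_filter_fst_lt_snd fun i j ↦ weightedCollision w i j v

end Collisions

section ProportionalSampling

variable {U : Type*} [Fintype U] [Nonempty U] {w : U → ℝ}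

lemma sum_ofReal_div_sum_eq_one (hw : ∀ x, 0 < w x) :
    ∑ x, ENNReal.ofReal (w x / ∑ y, w y) = 1 := by
  have hW : 0 < ∑ y, w y := Finset.sum_pos (fun x _ ↦ hw x) Finset.univ_nonempty
  rw [← ENNReal.ofReal_sum_of_nonneg fun x _ ↦ (div_pos (hw x) hW).le, ← Finset.sum_div,
    div_self hW.ne', ENNReal.ofReal_one]

/-- The law of a proportional sample: `x` is drawn with probability `w x / ∑ y, w y`. -/
noncomputable def proportionalPMF (hw : ∀ x, 0 < w x) : PMF U :=
  PMF.ofFintype (fun x ↦ ENNReal.ofReal (w x / ∑ y, w y)) (sum_ofReal_div_sum_eq_one hw)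

/-- The joint law of i.i.d. proportional samples indexed by `ι`. -/
noncomputable abbrev proportionalSamples (ι : Type*) [Fintype ι] [MeasurableSpace U]
    (hw : ∀ x, 0 < w x) : Measure (ι → U) :=
  Measure.pi fun _ ↦ (proportionalPMF hw).toMeasure

variable [MeasurableSpace U] [MeasurableSingletonClass U]

lemma integral_proportionalPMF (hw : ∀ x, 0 < w x) (f : U → ℝ) :
    ∫ x, f x ∂(proportionalPMF hw).toMeasure = ∑ x, w x / (∑ y, w y) * f x := by
  have hW : 0 < ∑ y, w y := Finset.sum_pos (fun x _ ↦ hw x) Finset.univ_nonempty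
  simp only [PMF.integral_eq_sum, proportionalPMF, PMF.ofFintype_apply,
    ENNReal.toReal_ofReal (div_pos (hw _) hW).le, smul_eq_mul]

lemma proportionalSamples_singleton {ι : Type*} [Fintype ι] (hw : ∀ x, 0 < w x) (v : ι → U) :
    proportionalSamples ι hw {v} = ∏ i, ENNReal.ofReal (w (v i) / ∑ y, w y) := by
  simp only [Measure.pi_singleton, PMF.toMeasure_apply_singleton _ _ (measurableSet_singleton _),
    proportionalPMF, PMF.ofFintype_apply]

section Moments

variable {ι : Type*} [DecidableEq U]

lemma integral_weightedCollision_update_pow [DecidableEq ι] (hw : ∀ x, 0 < w x) {i j : ι}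
    (hij : i ≠ j) (v : ι → U) {r : ℕ} (hr : r ≠ 0) :
    ∫ x, weightedCollision w i j (Function.update v i x) ^ r ∂(proportionalPMF hw).toMeasure =
      w (v j) / (∑ y, w y) * (w (v j))⁻¹ ^ r := by
  simp [integral_proportionalPMF, weightedCollision, Function.update_of_ne hij.symm, ite_pow, hr]

lemma integral_weightedCollision_update [DecidableEq ι] (hw : ∀ x, 0 < w x) {i j : ι}
    (hij : i ≠ j) (v : ι → U) :
    ∫ x, weightedCollision w i j (Function.update v i x) ∂(proportionalPMF hw).toMeasure =
      (∑ y, w y)⁻¹ := by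
  have := (hw (v j)).ne'
  have h := integral_weightedCollision_update_pow hw hij v one_ne_zero
  simp only [pow_one] at h
  rw [h]
  field_simp

variable [Fintype ι]

lemma integral_weightedCollision (hw : ∀ x, 0 < w x) {i j : ι} (hij : i ≠ j) :
    ∫ v, weightedCollision w i j v ∂proportionalSamples ι hw = (∑ y, w y)⁻¹ := by
  classical
  exact integral_pi_eq_of_integral_update_eq_const .of_finite
    (integral_weightedCollision_update hw hij)

lemma integral_weightedCollision_sq (hw : ∀ x, 0 < w x) {i j : ι} (hij : i ≠ j) :
    ∫ v, weightedCollision w i j v ^ 2 ∂proportionalSamples ι hw =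
      Fintype.card U / (∑ y, w y) ^ 2 := by
  classical
  have summand_eq (x : U) :
      w x / (∑ y, w y) * (w x / (∑ y, w y) * (w x)⁻¹ ^ 2) = 1 / (∑ y, w y) ^ 2 := by
    have := (hw x).ne'
    field_simp
  calc ∫ v, weightedCollision w i j v ^ 2 ∂proportionalSamples ι hw
      = ∫ v, w (v j) / (∑ y, w y) * (w (v j))⁻¹ ^ 2 ∂proportionalSamples ι hw := by
        rw [integral_pi_eq_integral_integral_update (i := i) .of_finite]
        simp only [integral_weightedCollision_update_pow hw hij _ two_ne_zero]
    _ = ∫ x, w x / (∑ y, w y) * (w x)⁻¹ ^ 2 ∂(proportionalPMF hw).toMeasure :=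
        integral_comp_eval (μ := fun _ : ι ↦ (proportionalPMF hw).toMeasure) (i := j)
          (f := fun x ↦ w x / (∑ y, w y) * (w x)⁻¹ ^ 2) .of_discrete
    _ = Fintype.card U / (∑ y, w y) ^ 2 := by
        simp only [integral_proportionalPMF, summand_eq, Finset.sum_const, Finset.card_univ,
          nsmul_eq_mul, mul_one_div]

lemma variance_weightedCollision_le (hw : ∀ x, 0 < w x) {i j : ι} (hij : i ≠ j) :
    Var[weightedCollision w i j; proportionalSamples ι hw] ≤
      Fintype.card U / (∑ y, w y) ^ 2 :=
  (variance_le_expectation_sq .of_discrete).trans_eq (integral_weightedCollision_sq hw hij)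

lemma covariance_weightedCollision_eq_zero (hw : ∀ x, 0 < w x) {i j k l : ι} (hij : i ≠ j)
    (hki : k ≠ i) (hli : l ≠ i) :
    cov[weightedCollision w i j, weightedCollision w k l; proportionalSamples ι hw] = 0 := by
  classical
  refine covariance_pi_eq_zero_of_integral_update_eq_const .of_discrete .of_discrete
    (integral_weightedCollision_update hw hij) fun v x ↦ ?_
  simp only [weightedCollision, Function.update_of_ne hki, Function.update_of_ne hli]

lemma integral_collisionSum (hw : ∀ x, 0 < w x) {T : Finset (ι × ι)} (hT : ∀ p ∈ T, p.1 ≠ p.2) :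
    ∫ v, collisionSum w T v ∂proportionalSamples ι hw = T.card * (∑ y, w y)⁻¹ := by
  simp only [collisionSum]
  rw [integral_finsetSum _ fun _ _ ↦ .of_finite,
    Finset.sum_congr rfl fun p hp ↦ integral_weightedCollision hw (hT p hp), Finset.sum_const,
    nsmul_eq_mul]

variable [LinearOrder ι] {T : Finset (ι × ι)}

-- Two distinct pairs leave an index that occurs in only one of them: average over that sample.
lemma covariance_weightedCollision_eq_zero_of_ne (hw : ∀ x, 0 < w x) {p q : ι × ι}
    (hp : p.1 < p.2) (hq : q.1 < q.2) (hpq : p ≠ q) :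
    cov[weightedCollision w p.1 p.2, weightedCollision w q.1 q.2; proportionalSamples ι hw] =
      0 := by
  by_cases h : q.1 ≠ p.1 ∧ q.2 ≠ p.1
  · exact covariance_weightedCollision_eq_zero hw hp.ne h.1 h.2
  · have free_snd : q.1 ≠ p.2 ∧ q.2 ≠ p.2 := by grind
    rw [weightedCollision_comm w p.1]
    exact covariance_weightedCollision_eq_zero hw hp.ne' free_snd.1 free_snd.2

lemma variance_collisionSum_le (hw : ∀ x, 0 < w x) (hT : ∀ p ∈ T, p.1 < p.2) :
    Var[collisionSum w T; proportionalSamples ι hw] ≤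
      T.card * (Fintype.card U / (∑ y, w y) ^ 2) :=
  calc Var[collisionSum w T; proportionalSamples ι hw]
      = ∑ p ∈ T, Var[weightedCollision w p.1 p.2; proportionalSamples ι hw] :=
        variance_fun_sum_of_pairwise_covariance_eq_zero (fun _ _ ↦ .of_discrete) fun p hp q hq ↦
          covariance_weightedCollision_eq_zero_of_ne hw (hT p hp) (hT q hq)
    _ ≤ ∑ _p ∈ T, (Fintype.card U / (∑ y, w y) ^ 2 : ℝ) :=
        Finset.sum_le_sum fun p hp ↦ variance_weightedCollision_le hw (hT p hp).ne
    _ = T.card * (Fintype.card U / (∑ y, w y) ^ 2) := by rw [Finset.sum_const, nsmul_eq_mul]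

lemma measureReal_le_abs_collisionSum_sub_le (hw : ∀ x, 0 < w x) (hT : ∀ p ∈ T, p.1 < p.2)
    {δ : ℝ} (hδ : 0 < δ) :
    (proportionalSamples ι hw).real {v | δ ≤ |collisionSum w T v - T.card * (∑ y, w y)⁻¹|} ≤
      T.card * (Fintype.card U / (∑ y, w y) ^ 2) / δ ^ 2 := by
  have chebyshev := meas_ge_le_variance_div_sq (μ := proportionalSamples ι hw)
    (X := collisionSum w T) .of_discrete hδ
  rw [integral_collisionSum hw fun p hp ↦ (hT p hp).ne] at chebyshev
  refine (ENNReal.toReal_le_of_le_ofReal ?_ chebyshev).trans ?_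
  · exact div_nonneg (variance_nonneg _ _) (sq_nonneg δ)
  · gcongr
    exact variance_collisionSum_le hw hT

lemma one_sub_le_measureReal_abs_estimate_sub_le (hw : ∀ x, 0 < w x) (hT : ∀ p ∈ T, p.1 < p.2)
    (hT₀ : T.Nonempty) {ε : ℝ} (hε0 : 0 < ε) (hε1 : ε ≤ 1) :
    1 - 4 * Fintype.card U / (ε ^ 2 * T.card) ≤ (proportionalSamples ι hw).real
      {v | |T.card * (collisionSum w T v)⁻¹ - ∑ y, w y| ≤ ε * ∑ y, w y} := by
  have hW : 0 < ∑ y, w y := Finset.sum_pos (fun x _ ↦ hw x) Finset.univ_nonempty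
  have hC : (0 : ℝ) < T.card := by exact_mod_cast hT₀.card_pos
  set W := ∑ y, w y
  set C := (T.card : ℝ)
  let good := {v : ι → U | |C * (collisionSum w T v)⁻¹ - W| ≤ ε * W}
  have bad_subset : goodᶜ ⊆ {v | ε * C / (2 * W) ≤ |collisionSum w T v - C * W⁻¹|} := by
    intro v hv
    contrapose! hv
    exact not_not.2 (abs_mul_inv_sub_le_of_abs_sub_mul_inv_le hC hW hε0.le hε1 (not_le.1 hv).le)
  have measure_bad : (proportionalSamples ι hw).real goodᶜ ≤
      4 * Fintype.card U / (ε ^ 2 * C) :=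
    calc (proportionalSamples ι hw).real goodᶜ
        ≤ C * (Fintype.card U / W ^ 2) / (ε * C / (2 * W)) ^ 2 :=
          (measureReal_mono bad_subset).trans
            (measureReal_le_abs_collisionSum_sub_le hw hT (by positivity))
      _ = 4 * Fintype.card U / (ε ^ 2 * C) := by field_simp; norm_num
  rw [probReal_compl_eq_one_sub .of_discrete] at measure_bad
  linarith

lemma two_thirds_le_measure_abs_estimate_sub_le (hw : ∀ x, 0 < w x)
    (hT : ∀ p ∈ T, p.1 < p.2) {ε : ℝ} (hε0 : 0 < ε) (hε1 : ε ≤ 1)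
    (hcard : 12 * (Fintype.card U : ℝ) ≤ ε ^ 2 * T.card) :
    2 / 3 ≤ proportionalSamples ι hw
      {v | |T.card * (collisionSum w T v)⁻¹ - ∑ y, w y| ≤ ε * ∑ y, w y} := by
  have hU : (0 : ℝ) < Fintype.card U := by exact_mod_cast Fintype.card_pos
  have hεT : 0 < ε ^ 2 * T.card := by linarith
  have hT₀ : T.Nonempty := by
    rw [← Finset.card_pos]
    exact_mod_cast pos_of_mul_pos_right hεT (sq_nonneg ε)
  have failure_le : 4 * Fintype.card U / (ε ^ 2 * T.card) ≤ 1 / 3 := by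
    rw [div_le_iff₀ hεT]
    linarith
  rw [← ofReal_measureReal, show (2 / 3 : ENNReal) = ENNReal.ofReal (2 / 3) by
    rw [ENNReal.ofReal_div_of_pos three_pos]; simp]
  refine ENNReal.ofReal_le_ofReal ?_
  linarith [one_sub_le_measureReal_abs_estimate_sub_le hw hT hT₀ hε0 hε1]

end Moments

end ProportionalSampling

/-- (`PropEstimator` guarantee.) Let `0 < ε < 1`, `nAdvice ≥ n`, and let
`m ≥ √(24·nAdvice)/ε + 1`. For `m` i.i.d. proportional samples, the estimate
`Ŵ = C(m,2) · (Σ_{i<j} Y_{ij})⁻¹` (interpreted as failing when the sum vanishes)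
is a `(1 ± ε)`-approximation of `W` with probability at least `2/3`. -/
theorem propEstimator_guarantee
    {Ω U : Type*} [MeasurableSpace Ω] (μ : Measure Ω) [IsProbabilityMeasure μ]
    [Fintype U] [DecidableEq U]
    (n : ℕ) (hn : Fintype.card U = n)
    (w : U → ℝ) (hw : ∀ x, 0 < w x)
    (W : ℝ) (hW : W = ∑ x, w x)
    (ε : ℝ) (hε0 : 0 < ε) (hε1 : ε < 1)
    (nAdvice : ℕ) (hnAdvice : n ≤ nAdvice)
    (m : ℕ) (hm : Real.sqrt (24 * nAdvice) / ε + 1 ≤ m)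
    (a : Fin m → Ω → U)
    (hlaw : ∀ v : Fin m → U,
      μ {ω | ∀ i, a i ω = v i} = ∏ i, ENNReal.ofReal (w (v i) / W))
    (Y : Fin m → Fin m → Ω → ℝ)
    (hY : ∀ i j ω, Y i j ω = if a i ω = a j ω then (w (a i ω))⁻¹ else 0)
    (What : Ω → ℝ)
    (hWhat : ∀ ω, What ω = (m.choose 2 : ℝ) * (∑ i, ∑ j ∈ Finset.Ioi i, Y i j ω)⁻¹) :
    (2 / 3 : ENNReal) ≤ μ {ω | |What ω - W| ≤ ε * W} := by
  subst hn hW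
  let T : Finset (Fin m × Fin m) := {p | p.1 < p.2}
  have card_T : T.card = m.choose 2 := by rw [card_filter_fst_lt_snd, Fintype.card_fin]
  have enough_pairs : 12 * (Fintype.card U : ℝ) ≤ ε ^ 2 * T.card := by
    rw [card_T]
    exact (by gcongr : _ ≤ 12 * (nAdvice : ℝ)).trans
      (mul_le_sq_mul_choose_two nAdvice.cast_nonneg hε0 hm)
  have one_le_m : (1 : ℝ) ≤ m := (le_add_of_nonneg_left (by positivity)).trans hm
  obtain ⟨ω⟩ : Nonempty Ω := nonempty_of_isProbabilityMeasure μ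
  have : Nonempty U := ⟨a ⟨0, by exact_mod_cast one_le_m⟩ ω⟩
  let _ : MeasurableSpace U := ⊤
  have What_eq (ω : Ω) : What ω = T.card * (collisionSum w T fun i ↦ a i ω)⁻¹ := by
    simp only [hWhat, hY, card_T, T, collisionSum_filter_fst_lt_snd, weightedCollision]
  have fiber (v : Fin m → U) :
      μ ((fun ω i ↦ a i ω) ⁻¹' {v}) = proportionalSamples (Fin m) hw {v} := by
    simp only [proportionalSamples_singleton, ← hlaw, Set.preimage, Set.mem_singleton_iff,
      funext_iff]
  simp only [What_eq]
  exact (two_thirds_le_measure_abs_estimate_sub_le hw (by simp [T]) hε0 hε1.le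
    enough_pairs).trans (measure_le_measure_preimage_of_fiber_le (fun v ↦ (fiber v).le) _)
end

section
/- There exists a universal constant C > 0 such that the following holds. Let U be a finite set with |U| = n ≥ 2 and w : U → (0,∞) a positive weight function with total weight W = Σ_{a∈U} w(a). For i ∈ ℤ let B_i = { a ∈ U : 2^i ≤ w(a) < 2^{i+1} }. Let a₁, a₂ be i.i.d. proportional samples, set b_j = ⌊log₂ w(a_j)⌋ for j = 1, 2, and b = max(b₁, b₂). Let P_b = P_prop(B_b) = (Σ_{x∈B_b} w(x))/W be the proportional-sampling probability of the (random) bucket B_b. Then E[1/P_b] ≤ C·(1 + log n). -/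
/-!
Write `q i` for the probability of the bucket `i`. Since `q i * q j / q (max i j) = q (min i j)`,
the expectation equals `∑ i, ∑ j, q (min i j)` over pairs of nonempty buckets, which is at most
twice the expected number of nonempty buckets at or above that of one sample `x`. The index of such
a bucket lies between `⌊log₂ (w x)⌋` and `⌊log₂ W⌋`, so there are at most `2 + log₂ (W / w x)` of
them. The expectation of `log₂ (W / w x)` is the Shannon entropy of the proportional distribution,
which is at most `log₂ n`.
-/

open MeasureTheory ProbabilityTheory

section FiberMass

open Finset

lemma sum_sum_comp_min_le {L K : Type*} [LinearOrder L] [Semiring K] [PartialOrder K]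
    [IsOrderedAddMonoid K] {s : Finset L} {q : L → K} (hq : ∀ i ∈ s, 0 ≤ q i) :
    ∑ i ∈ s, ∑ j ∈ s, q (min i j) ≤ 2 * ∑ i ∈ s, q i * #{j ∈ s | i ≤ j} := by
  have pointwise : ∀ i ∈ s, ∀ j ∈ s,
      q (min i j) ≤ (if i ≤ j then q i else 0) + if j ≤ i then q j else 0 := by
    intro i hi j hj
    rcases le_total i j with h | h
    · rw [min_eq_left h, if_pos h]
      exact le_add_of_nonneg_right (by split_ifs <;> simp [hq j hj])
    · rw [min_eq_right h, if_pos h]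
      exact le_add_of_nonneg_left (by split_ifs <;> simp [hq i hi])
  have count : ∑ i ∈ s, ∑ j ∈ s, (if i ≤ j then q i else 0) =
      ∑ i ∈ s, q i * #{j ∈ s | i ≤ j} := by
    refine sum_congr rfl fun i _ => ?_
    rw [← sum_filter, sum_const, nsmul_eq_mul']
  calc ∑ i ∈ s, ∑ j ∈ s, q (min i j)
      ≤ ∑ i ∈ s, ∑ j ∈ s, ((if i ≤ j then q i else 0) + if j ≤ i then q j else 0) :=
        sum_le_sum fun i hi => sum_le_sum fun j hj => pointwise i hi j hj
    _ = ∑ i ∈ s, ∑ j ∈ s, (if i ≤ j then q i else 0) +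
          ∑ j ∈ s, ∑ i ∈ s, (if j ≤ i then q j else 0) := by
        simp only [sum_add_distrib]
        rw [sum_comm (f := fun i j => if j ≤ i then q j else 0)]
    _ = 2 * ∑ i ∈ s, q i * #{j ∈ s | i ≤ j} := by rw [count, two_mul]

variable {U L K : Type*} [Fintype U]

/-- The mass function of the image under `β` of the measure on `U` with point masses `p`. For a
bucket assignment `β` and a probability vector `p`, it gives the probabilities of the buckets. -/
def fiberMass [DecidableEq L] [AddCommMonoid K] (p : U → K) (β : U → L) (i : L) : K :=
  ∑ x with β x = i, p x

lemma sum_mul_comp_eq_sum_fiberMass_mul [DecidableEq L] [NonUnitalNonAssocSemiring K]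
    (p : U → K) (β : U → L) (f : L → K) :
    ∑ x, p x * f (β x) = ∑ i ∈ univ.image β, fiberMass p β i * f i := by
  rw [← sum_fiberwise_of_maps_to fun x _ => mem_image_of_mem β (mem_univ x)]
  refine sum_congr rfl fun i _ => ?_
  rw [fiberMass, sum_mul]
  exact sum_congr rfl fun x hx => by rw [(mem_filter.1 hx).2]

lemma fiberMass_nonneg [DecidableEq L] [AddCommMonoid K] [PartialOrder K] [IsOrderedAddMonoid K]
    {p : U → K} (hp : ∀ x, 0 ≤ p x) (β : U → L) (i : L) : 0 ≤ fiberMass p β i :=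
  sum_nonneg fun x _ => hp x

lemma fiberMass_pos_of_mem_image [DecidableEq L] [AddCommMonoid K] [PartialOrder K]
    [IsOrderedCancelAddMonoid K] {p : U → K} (hp : ∀ x, 0 < p x) {β : U → L} {i : L}
    (hi : i ∈ univ.image β) : 0 < fiberMass p β i := by
  obtain ⟨x, -, rfl⟩ := mem_image.1 hi
  exact sum_pos (fun y _ => hp y) ⟨x, by simp⟩

variable [LinearOrder L] [Field K] [LinearOrder K] [IsStrictOrderedRing K]

lemma sum_sum_mul_inv_fiberMass_max {p : U → K} (hp : ∀ x, 0 < p x) (β : U → L) :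
    ∑ x, ∑ y, p x * p y * (fiberMass p β (max (β x) (β y)))⁻¹ =
      ∑ i ∈ univ.image β, ∑ j ∈ univ.image β, fiberMass p β (min i j) := by
  simp only [mul_assoc, ← mul_sum]
  rw [sum_mul_comp_eq_sum_fiberMass_mul p β fun i =>
    ∑ y, p y * (fiberMass p β (max i (β y)))⁻¹]
  refine sum_congr rfl fun i hi => ?_
  rw [sum_mul_comp_eq_sum_fiberMass_mul p β fun j => (fiberMass p β (max i j))⁻¹, mul_sum]
  refine sum_congr rfl fun j hj => ?_
  have hmax : fiberMass p β (max i j) ≠ 0 :=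
    (fiberMass_pos_of_mem_image hp (by rcases max_choice i j with h | h <;> rwa [h])).ne'
  rw [← mul_assoc, ← fn_min_mul_fn_max (fiberMass p β) i j, mul_inv_cancel_right₀ hmax]

lemma sum_sum_mul_inv_fiberMass_max_le {p : U → K} (hp : ∀ x, 0 < p x) (β : U → L) :
    ∑ x, ∑ y, p x * p y * (fiberMass p β (max (β x) (β y)))⁻¹ ≤
      2 * ∑ x, p x * #{i ∈ univ.image β | β x ≤ i} := by
  rw [sum_sum_mul_inv_fiberMass_max hp,
    sum_mul_comp_eq_sum_fiberMass_mul p β fun i => (#{j ∈ univ.image β | i ≤ j} : K)]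
  exact sum_sum_comp_min_le fun i _ => fiberMass_nonneg (fun x => (hp x).le) β i

end FiberMass

section Dyadic

open Finset Real

lemma card_Icc_floor_le {K : Type*} [CommRing K] [LinearOrder K] [IsStrictOrderedRing K]
    [FloorRing K] {s t : K} (hst : s ≤ t) : (#(Icc ⌊s⌋ ⌊t⌋) : K) ≤ 2 + (t - s) := by
  have hcard : (#(Icc ⌊s⌋ ⌊t⌋) : ℤ) = ⌊t⌋ + 1 - ⌊s⌋ :=
    Int.card_Icc_of_le _ _ (by linarith [Int.floor_le_floor hst])
  have hcard' : (#(Icc ⌊s⌋ ⌊t⌋) : K) = ⌊t⌋ + 1 - ⌊s⌋ := by exact_mod_cast hcard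
  linarith [Int.floor_le t, Int.lt_floor_add_one s]

variable {U : Type*}

lemma sum_negMulLog_le_log_card [Fintype U] {p : U → ℝ} (hp : ∀ x, 0 ≤ p x) (hsum : ∑ x, p x = 1) :
    ∑ x, negMulLog (p x) ≤ log (Fintype.card U) := by
  have : Nonempty U := by
    by_contra! h
    simp at hsum
  have hcard : (0 : ℝ) < Fintype.card U := by exact_mod_cast Fintype.card_pos
  have jensen := concaveOn_negMulLog.le_map_sum (t := univ) (p := p)
    (w := fun _ => (Fintype.card U : ℝ)⁻¹) (fun _ _ => by positivity) (by simp)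
    (fun x _ => hp x)
  simp only [smul_eq_mul, ← mul_sum, hsum, mul_one] at jensen
  rwa [negMulLog, log_inv, neg_mul_neg, mul_le_mul_iff_right₀ (inv_pos.2 hcard)] at jensen

/-- The index `i` of the dyadic bucket `{a : 2 ^ i ≤ w a < 2 ^ (i + 1)}` containing `x`, for a
positive weight function `w`. -/
noncomputable def dyadicIndex (w : U → ℝ) (x : U) : ℤ := ⌊logb 2 (w x)⌋

variable [Fintype U] {w : U → ℝ}

/-- The probability that a proportional sample for the weight function `w` equals `x`. -/
noncomputable def proportionalProb (w : U → ℝ) (x : U) : ℝ := w x / ∑ y, w y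

lemma proportionalProb_pos (hw : ∀ x, 0 < w x) (x : U) : 0 < proportionalProb w x :=
  div_pos (hw x) (sum_pos (fun y _ => hw y) ⟨x, mem_univ x⟩)

lemma sum_proportionalProb (hw : ∑ x, w x ≠ 0) : ∑ x, proportionalProb w x = 1 := by
  simp only [proportionalProb, ← sum_div, div_self hw]

lemma card_dyadicIndex_ge_le (hw : ∀ x, 0 < w x) (x : U) :
    (#{i ∈ univ.image (dyadicIndex w) | dyadicIndex w x ≤ i} : ℝ) ≤
      2 - logb 2 (proportionalProb w x) := by
  have le_total_weight (y : U) : logb 2 (w y) ≤ logb 2 (∑ z, w z) :=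
    logb_le_logb_of_le one_lt_two (hw y) (single_le_sum (fun z _ => (hw z).le) (mem_univ y))
  have between : {i ∈ univ.image (dyadicIndex w) | dyadicIndex w x ≤ i} ⊆
      Icc ⌊logb 2 (w x)⌋ ⌊logb 2 (∑ z, w z)⌋ := by
    intro i hi
    obtain ⟨himage, hxi⟩ := mem_filter.1 hi
    obtain ⟨y, -, rfl⟩ := mem_image.1 himage
    exact mem_Icc.2 ⟨hxi, Int.floor_le_floor (le_total_weight y)⟩
  calc (#{i ∈ univ.image (dyadicIndex w) | dyadicIndex w x ≤ i} : ℝ)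
      ≤ #(Icc ⌊logb 2 (w x)⌋ ⌊logb 2 (∑ z, w z)⌋) := by exact_mod_cast card_le_card between
    _ ≤ 2 + (logb 2 (∑ z, w z) - logb 2 (w x)) := card_Icc_floor_le (le_total_weight x)
    _ = 2 - logb 2 (proportionalProb w x) := by
        rw [proportionalProb, logb_div (hw x).ne' (sum_pos (fun y _ => hw y) ⟨x, mem_univ x⟩).ne']
        ring

lemma sum_proportionalProb_mul_card_dyadicIndex_ge_le [Nonempty U] (hw : ∀ x, 0 < w x) :
    ∑ x, proportionalProb w x * #{i ∈ univ.image (dyadicIndex w) | dyadicIndex w x ≤ i} ≤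
      2 + logb 2 (Fintype.card U) := by
  have hp := proportionalProb_pos hw
  have hsum : ∑ x, proportionalProb w x = 1 :=
    sum_proportionalProb (sum_pos (fun x _ => hw x) univ_nonempty).ne'
  calc ∑ x, proportionalProb w x * #{i ∈ univ.image (dyadicIndex w) | dyadicIndex w x ≤ i}
      ≤ ∑ x, proportionalProb w x * (2 - logb 2 (proportionalProb w x)) :=
        sum_le_sum fun x _ => mul_le_mul_of_nonneg_left (card_dyadicIndex_ge_le hw x) (hp x).le
    _ = ∑ x, (proportionalProb w x * 2 + negMulLog (proportionalProb w x) / log 2) :=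
        sum_congr rfl fun x _ => by rw [negMulLog, logb]; ring
    _ = 2 + (∑ x, negMulLog (proportionalProb w x)) / log 2 := by
        rw [sum_add_distrib, ← sum_mul, ← sum_div, hsum, one_mul]
    _ ≤ 2 + logb 2 (Fintype.card U) := by
        rw [logb]
        gcongr
        exact sum_negMulLog_le_log_card (fun x => (hp x).le) hsum

lemma sum_sum_mul_inv_fiberMass_dyadicIndex_le [Nonempty U] (hw : ∀ x, 0 < w x) :
    ∑ x, ∑ y, proportionalProb w x * proportionalProb w y *
      (fiberMass (proportionalProb w) (dyadicIndex w) (max (dyadicIndex w x) (dyadicIndex w y)))⁻¹ ≤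
      2 * (2 + logb 2 (Fintype.card U)) := by
  refine (sum_sum_mul_inv_fiberMass_max_le (proportionalProb_pos hw) (dyadicIndex w)).trans ?_
  gcongr
  exact sum_proportionalProb_mul_card_dyadicIndex_ge_le hw

end Dyadic

lemma logb_two_natCast_le_two_mul_log (n : ℕ) : Real.logb 2 n ≤ 2 * Real.log n := by
  rw [Real.logb, div_le_iff₀ (Real.log_pos one_lt_two)]
  nlinarith [Real.log_natCast_nonneg n, Real.log_two_gt_d9]

lemma integral_comp_le_sum_measureReal {Ω V : Type*} [MeasurableSpace Ω] (μ : Measure Ω)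
    [IsFiniteMeasure μ] [Fintype V] (a : Ω → V) {f : V → ℝ} (hf : ∀ v, 0 ≤ f v) :
    ∫ ω, f (a ω) ∂μ ≤ ∑ v, μ.real {ω | a ω = v} * f v := by
  -- The fibers of `a` need not be measurable, so they are replaced by measurable hulls.
  let hull (v : V) : Set Ω := toMeasurable μ {ω | a ω = v}
  have measurableSet_hull (v : V) : MeasurableSet (hull v) := measurableSet_toMeasurable _ _
  have integrable_hull (v : V) : Integrable ((hull v).indicator fun _ => f v) μ :=
    (integrable_const (f v)).indicator (measurableSet_hull v)
  have le_sum_hull (ω : Ω) : f (a ω) ≤ ∑ v, (hull v).indicator (fun _ => f v) ω := by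
    have hmem : ω ∈ hull (a ω) := subset_toMeasurable _ _ rfl
    calc f (a ω) = (hull (a ω)).indicator (fun _ => f (a ω)) ω := by
          rw [Set.indicator_of_mem hmem]
      _ ≤ ∑ v, (hull v).indicator (fun _ => f v) ω :=
          Finset.single_le_sum (f := fun v => (hull v).indicator (fun _ => f v) ω)
            (fun v _ => Set.indicator_nonneg (fun _ _ => hf v) ω) (Finset.mem_univ (a ω))
  calc ∫ ω, f (a ω) ∂μ
      ≤ ∫ ω, ∑ v, (hull v).indicator (fun _ => f v) ω ∂μ :=
        integral_mono_of_nonneg (ae_of_all _ fun ω => hf (a ω))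
          (integrable_finsetSum _ fun v _ => integrable_hull v) (ae_of_all _ le_sum_hull)
    _ = ∑ v, μ.real (hull v) * f v := by
        simp only [integral_finsetSum _ fun v _ => integrable_hull v,
          integral_indicator_const _ (measurableSet_hull _), smul_eq_mul]
    _ = ∑ v, μ.real {ω | a ω = v} * f v := by
        simp only [hull, measureReal_def, measure_toMeasurable]

lemma integral_comp_pair_le_sum_sum {Ω U V : Type*} [MeasurableSpace Ω] (μ : Measure Ω)
    [IsFiniteMeasure μ] [Fintype U] [Fintype V] {a₁ : Ω → U} {a₂ : Ω → V} {p : U → ℝ} {q : V → ℝ}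
    (hp : ∀ x, 0 ≤ p x) (hq : ∀ y, 0 ≤ q y)
    (hlaw : ∀ x y, μ {ω | a₁ ω = x ∧ a₂ ω = y} = ENNReal.ofReal (p x) * ENNReal.ofReal (q y))
    {f : U → V → ℝ} (hf : ∀ x y, 0 ≤ f x y) :
    ∫ ω, f (a₁ ω) (a₂ ω) ∂μ ≤ ∑ x, ∑ y, p x * q y * f x y := by
  have pair_law (v : U × V) : μ.real {ω | (a₁ ω, a₂ ω) = v} = p v.1 * q v.2 := by
    simp only [Prod.ext_iff, measureReal_def, hlaw, ENNReal.toReal_mul,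
      ENNReal.toReal_ofReal (hp _), ENNReal.toReal_ofReal (hq _)]
  calc ∫ ω, f (a₁ ω) (a₂ ω) ∂μ
      ≤ ∑ v : U × V, μ.real {ω | (a₁ ω, a₂ ω) = v} * f v.1 v.2 :=
        integral_comp_le_sum_measureReal μ (fun ω => (a₁ ω, a₂ ω)) (f := fun v => f v.1 v.2)
          fun v => hf v.1 v.2
    _ = ∑ x, ∑ y, p x * q y * f x y := by simp only [pair_law, Fintype.sum_prod_type]

/-- There is a universal constant `C > 0` such that the following holds.
Partition a finite weighted set `(U, w)` (`|U| = n ≥ 2`) into buckets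
`B_i = {a : 2^i ≤ w a < 2^{i+1}}`, i.e. `a ∈ B_{⌊log₂ w(a)⌋}`.  Draw two i.i.d.
proportional samples `a₁, a₂`, and let `b` be the larger of their bucket indices.
Then `E[1/P_prop(B_b)] ≤ C·(1 + log n)`. -/
theorem bucket_inverse_probability_bound :
    ∃ C : ℝ, 0 < C ∧
      ∀ (Ω U : Type) (_ : MeasurableSpace Ω) (μ : Measure Ω) (_ : IsProbabilityMeasure μ)
        (_ : Fintype U) (_ : DecidableEq U) (n : ℕ), 2 ≤ n → Fintype.card U = n →
        ∀ (w : U → ℝ), (∀ x, 0 < w x) →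
        ∀ (W : ℝ), W = ∑ x, w x →
        ∀ (a₁ a₂ : Ω → U),
          (∀ v₁ v₂ : U, μ {ω | a₁ ω = v₁ ∧ a₂ ω = v₂} =
            ENNReal.ofReal (w v₁ / W) * ENNReal.ofReal (w v₂ / W)) →
        ∀ (b : Ω → ℤ),
          (∀ ω, b ω = max ⌊Real.logb 2 (w (a₁ ω))⌋ ⌊Real.logb 2 (w (a₂ ω))⌋) →
        ∀ (P : ℤ → ℝ),
          (∀ i : ℤ, P i =
            (∑ x ∈ Finset.univ.filter (fun x => ⌊Real.logb 2 (w x)⌋ = i), w x) / W) →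
        ∫ ω, (P (b ω))⁻¹ ∂μ ≤ C * (1 + Real.log n) := by
  refine ⟨4, by norm_num, ?_⟩
  intro Ω U _ μ _ _ _ n hn hcard w hw W hW a₁ a₂ hlaw b hb P hP
  subst hW hcard
  have : Nonempty U := Fintype.card_pos_iff.1 (by lia)
  have hp (x : U) : 0 ≤ proportionalProb w x := (proportionalProb_pos hw x).le
  obtain rfl : P = fiberMass (proportionalProb w) (dyadicIndex w) :=
    funext fun i => by rw [hP, Finset.sum_div]; rfl
  obtain rfl : b = fun ω => max (dyadicIndex w (a₁ ω)) (dyadicIndex w (a₂ ω)) := funext hb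
  calc ∫ ω, (fiberMass (proportionalProb w) (dyadicIndex w)
          (max (dyadicIndex w (a₁ ω)) (dyadicIndex w (a₂ ω))))⁻¹ ∂μ
      ≤ ∑ x, ∑ y, proportionalProb w x * proportionalProb w y *
          (fiberMass (proportionalProb w) (dyadicIndex w)
            (max (dyadicIndex w x) (dyadicIndex w y)))⁻¹ :=
        integral_comp_pair_le_sum_sum μ hp hp hlaw
          (f := fun x y => (fiberMass (proportionalProb w) (dyadicIndex w)
            (max (dyadicIndex w x) (dyadicIndex w y)))⁻¹)
          fun _ _ => inv_nonneg.2 (fiberMass_nonneg hp _ _)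
    _ ≤ 2 * (2 + Real.logb 2 (Fintype.card U)) := sum_sum_mul_inv_fiberMass_dyadicIndex_le hw
    _ ≤ 4 * (1 + Real.log (Fintype.card U)) := by
        linarith [logb_two_natCast_le_two_mul_log (Fintype.card U)]
end

section
/- For every sequence of parameters (n_k, ε_k, m_k) with n_k → ∞, 0 < ε_k < 1/3, (1−ε_k)·n_k a positive integer, m_k·ε_k/√(n_k) → 0 and m_k/n_k → 0, the following holds for all k large enough. Let N be a random set size equal to n_k with probability 1/2 and to (1−ε_k)·n_k otherwise; conditionally on N, draw m_k i.i.d. uniform samples from a set of size N and let ℓ be the number of distinct elements among them. Define the likelihood ratio R(ℓ) = (1−ε_k)^{m_k−ℓ} · Π_{i=1}^{ℓ−1} (1 − i/n_k)/(1 − i/((1−ε_k)·n_k)) (which equals the ratio P(fingerprint | N = n_k)/P(fingerprint | N = (1−ε_k)·n_k)). Then P( 98/100 ≤ R(ℓ) ≤ 100/98 ) ≥ 99/100. -/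
open MeasureTheory ProbabilityTheory Filter

/-!
Reveal the samples one at a time. When `d` values have been seen in a population of size
`r = (1 - e) * n`, the next draw repeats one of them with probability `d / r`, and the likelihood
ratio is multiplied by `1 - e` on a repeat and by `(1 - d / n) / (1 - d / r)` on a new value. Under
the uniform law of size `r` this makes the likelihood ratio a martingale of mean `1` whose second
moment grows by the factor `1 + e² d / (r - d)` at each draw. After `m` draws its variance is
therefore at most `exp (e² m² / (r - m)) - 1`, which tends to `0`. Chebyshev's inequality gives
the concentration under size `r`, and weighting by the likelihood ratio transfers it to size `n`.
-/

open scoped BigOperators Topology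

section DistinctCount

/-- The number `ℓ` of distinct values taken by a sample. It determines the conditional likelihood
of the fingerprint, so the fingerprint itself is not formalised. -/
def distinctCount {α : Type*} [DecidableEq α] {m : ℕ} (v : Fin m → α) : ℕ :=
  (Finset.univ.image v).card

variable {α β : Type*} [DecidableEq α] [DecidableEq β] {m : ℕ}

lemma distinctCount_le (v : Fin m → α) : distinctCount v ≤ m := by
  simpa [distinctCount] using Finset.card_image_le (s := Finset.univ) (f := v)

lemma distinctCount_comp {f : α → β} (hf : Function.Injective f) (v : Fin m → α) :
    distinctCount (f ∘ v) = distinctCount v := by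
  rw [distinctCount, ← Finset.image_image, Finset.card_image_of_injective _ hf, distinctCount]

lemma distinctCount_cons (a : α) (v : Fin m → α) :
    distinctCount (Fin.cons a v : Fin (m + 1) → α) = (insert a (Finset.univ.image v)).card := by
  rw [distinctCount]
  congr 1
  ext x
  simp [Fin.exists_fin_succ, eq_comm]

variable [Fintype α]

lemma expect_card_insert [Nonempty α] (S : Finset α) (g : ℕ → ℝ) :
    𝔼 a, g (insert a S).card =
      (S.card / Fintype.card α : ℝ) * g S.card +
        (1 - S.card / Fintype.card α) * g (S.card + 1) := by
  have hold : ∑ a ∈ S, g (insert a S).card = S.card * g S.card := by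
    rw [Finset.sum_congr rfl fun a ha => by rw [Finset.insert_eq_of_mem ha], Finset.sum_const,
      nsmul_eq_mul]
  have hnew : ∑ a ∈ Sᶜ, g (insert a S).card =
      (Fintype.card α - S.card : ℝ) * g (S.card + 1) := by
    rw [Finset.sum_congr rfl fun a ha => by
        rw [Finset.card_insert_of_notMem (Finset.mem_compl.1 ha)],
      Finset.sum_const, nsmul_eq_mul, Finset.card_compl, Nat.cast_sub S.card_le_univ]
  rw [Fintype.expect_eq_sum_div_card, ← Finset.sum_add_sum_compl S, hold, hnew]
  field_simp

lemma expect_distinctCount_succ [Nonempty α] (m : ℕ) (g : ℕ → ℝ) :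
    𝔼 v : Fin (m + 1) → α, g (distinctCount v) =
      𝔼 v : Fin m → α, ((distinctCount v / Fintype.card α : ℝ) * g (distinctCount v) +
        (1 - distinctCount v / Fintype.card α) * g (distinctCount v + 1)) := by
  calc 𝔼 v : Fin (m + 1) → α, g (distinctCount v)
    _ = 𝔼 p : α × (Fin m → α), g (distinctCount (Fin.cons p.1 p.2 : Fin (m + 1) → α)) :=
        (Fintype.expect_equiv (Fin.consEquiv fun _ => α) _ _ fun _ => rfl).symm
    _ = 𝔼 v : Fin m → α, 𝔼 a, g (insert a (Finset.univ.image v)).card := by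
        simp only [distinctCount_cons]
        rw [← Finset.univ_product_univ, Finset.expect_product, Finset.expect_comm]
    _ = _ := by simp only [expect_card_insert, distinctCount]

end DistinctCount

section LikelihoodRatio

/-- The likelihood ratio `R(l)` between population sizes `n` and `(1 - e) * n` when `m` draws show
`l` distinct values. The truncated `m - l` is harmless because `l ≤ m` for an actual sample. -/
noncomputable def likelihoodRatio (n : ℕ) (e : ℝ) (m l : ℕ) : ℝ :=
  (1 - e) ^ (m - l) *
    ∏ i ∈ Finset.Ico 1 l, (1 - (i : ℝ) / n) / (1 - (i : ℝ) / ((1 - e) * n))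

lemma likelihoodRatio_zero_zero (n : ℕ) (e : ℝ) : likelihoodRatio n e 0 0 = 1 := by
  simp [likelihoodRatio]

lemma likelihoodRatio_succ_of_le (n : ℕ) (e : ℝ) {m l : ℕ} (hl : l ≤ m) :
    likelihoodRatio n e (m + 1) l = (1 - e) * likelihoodRatio n e m l := by
  rw [likelihoodRatio, likelihoodRatio, Nat.succ_sub hl, pow_succ]
  ring

lemma likelihoodRatio_succ_succ (n : ℕ) (e : ℝ) (m l : ℕ) :
    likelihoodRatio n e (m + 1) (l + 1) =
      (1 - (l : ℝ) / n) / (1 - (l : ℝ) / ((1 - e) * n)) * likelihoodRatio n e m l := by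
  rw [likelihoodRatio, likelihoodRatio, Nat.add_sub_add_right]
  rcases Nat.eq_zero_or_pos l with rfl | hl
  · simp
  · rw [Finset.prod_Ico_succ_top hl]
    ring

variable {n r m d : ℕ} {e : ℝ}

lemma pos_of_natCast_eq_mul {c : ℝ} (hr : 0 < r) (hrn : (r : ℝ) = c * n) : 0 < n :=
  Nat.pos_of_ne_zero <| by
    rintro rfl
    simp [hr.ne'] at hrn

lemma div_eq_mul_div_of_eq_mul {c y z : ℝ} (hy : y ≠ 0) (hyz : y = c * z) (x : ℝ) :
    x / z = c * (x / y) := by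
  obtain ⟨hc, hz⟩ := mul_ne_zero_iff.1 (hyz ▸ hy)
  rw [hyz]
  field_simp

lemma likelihoodRatio_step_mul (hrn : (r : ℝ) = (1 - e) * n) (hdm : d ≤ m) (hdr : d < r) (a b : ℝ) :
    (d / r : ℝ) * (likelihoodRatio n e (m + 1) d * a) +
        (1 - d / r) * (likelihoodRatio n e (m + 1) (d + 1) * b) =
      likelihoodRatio n e m d * ((d / n : ℝ) * a + (1 - d / n) * b) := by
  have hr : (0 : ℝ) < r := by exact_mod_cast d.zero_le.trans_lt hdr
  have hrepeat : (d / n : ℝ) = (1 - e) * (d / r) := div_eq_mul_div_of_eq_mul hr.ne' hrn _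
  have hnew : (1 - d / r : ℝ) * ((1 - d / n) / (1 - d / r)) = 1 - d / n :=
    mul_div_cancel₀ _ (sub_ne_zero.2 ((div_lt_one hr).2 (by exact_mod_cast hdr)).ne')
  rw [likelihoodRatio_succ_of_le n e hdm, likelihoodRatio_succ_succ, ← hrn]
  linear_combination -likelihoodRatio n e m d * a * hrepeat + likelihoodRatio n e m d * b * hnew

lemma likelihoodRatio_step_sq (hrn : (r : ℝ) = (1 - e) * n) (hdm : d ≤ m) (hdr : d < r) :
    (d / r : ℝ) * likelihoodRatio n e (m + 1) d ^ 2 +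
        (1 - d / r) * likelihoodRatio n e (m + 1) (d + 1) ^ 2 =
      (1 + e ^ 2 * d / (r - d)) * likelihoodRatio n e m d ^ 2 := by
  have hr : (0 : ℝ) < r := by exact_mod_cast d.zero_le.trans_lt hdr
  have hrd : (0 : ℝ) < r - d := sub_pos.2 (by exact_mod_cast hdr)
  have hdn : (d / n : ℝ) = (1 - e) * (d / r) := div_eq_mul_div_of_eq_mul hr.ne' hrn _
  have hdr' : (1 - d / r : ℝ) = (r - d) / r := by field_simp
  have hfactor : (d / r : ℝ) * (1 - e) ^ 2 +
      (1 - d / r) * ((1 - d / n) / (1 - d / r)) ^ 2 = 1 + e ^ 2 * d / (r - d) := by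
    rw [hdn, hdr']
    field_simp
    ring
  rw [likelihoodRatio_succ_of_le n e hdm, likelihoodRatio_succ_succ, ← hrn, ← hfactor]
  ring

end LikelihoodRatio

section Moments

variable {α β : Type*} [Fintype α] [DecidableEq α] [Fintype β] [DecidableEq β] {e : ℝ}

theorem expect_distinctCount_eq_expect_likelihoodRatio_mul
    (hcard : (Fintype.card β : ℝ) = (1 - e) * Fintype.card α) {m : ℕ} (hm : m ≤ Fintype.card β)
    (g : ℕ → ℝ) :
    𝔼 v : Fin m → α, g (distinctCount v) =
      𝔼 v : Fin m → β,
        likelihoodRatio (Fintype.card α) e m (distinctCount v) * g (distinctCount v) := by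
  induction m generalizing g with
  | zero => simp [distinctCount, likelihoodRatio_zero_zero]
  | succ m ih =>
    have : Nonempty β := Fintype.card_pos_iff.1 (m.succ_pos.trans_le hm)
    have : Nonempty α := Fintype.card_pos_iff.1 (pos_of_natCast_eq_mul Fintype.card_pos hcard)
    rw [expect_distinctCount_succ, ih (Nat.le_of_succ_le hm) fun d =>
      (d / Fintype.card α : ℝ) * g d + (1 - d / Fintype.card α) * g (d + 1),
      expect_distinctCount_succ m fun d => likelihoodRatio (Fintype.card α) e (m + 1) d * g d]
    refine Finset.expect_congr rfl fun v _ => ?_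
    have hd : distinctCount v ≤ m := distinctCount_le v
    exact (likelihoodRatio_step_mul hcard hd (hd.trans_lt hm) _ _).symm

lemma expect_likelihoodRatio [Nonempty β] {n m : ℕ}
    (hcard : (Fintype.card β : ℝ) = (1 - e) * n) (hm : m ≤ Fintype.card β) :
    𝔼 v : Fin m → β, likelihoodRatio n e m (distinctCount v) = 1 := by
  have : NeZero n := ⟨(pos_of_natCast_eq_mul Fintype.card_pos hcard).ne'⟩
  simpa using (expect_distinctCount_eq_expect_likelihoodRatio_mul (α := Fin n)
    (by simpa using hcard) hm fun _ => 1).symm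

lemma expect_likelihoodRatio_sq_le {n M : ℕ} (hcard : (Fintype.card β : ℝ) = (1 - e) * n)
    (hM : M < Fintype.card β) {m : ℕ} (hm : m ≤ M) :
    𝔼 v : Fin m → β, likelihoodRatio n e m (distinctCount v) ^ 2 ≤
      (1 + e ^ 2 * M / (Fintype.card β - M)) ^ m := by
  have hMr : (0 : ℝ) < Fintype.card β - M := sub_pos.2 (by exact_mod_cast hM)
  have : Nonempty β := Fintype.card_pos_iff.1 (M.zero_le.trans_lt hM)
  induction m with
  | zero => simp [distinctCount, likelihoodRatio_zero_zero]
  | succ m ih =>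
    calc 𝔼 v : Fin (m + 1) → β, likelihoodRatio n e (m + 1) (distinctCount v) ^ 2
      _ = 𝔼 v : Fin m → β, (1 + e ^ 2 * distinctCount v / (Fintype.card β - distinctCount v)) *
            likelihoodRatio n e m (distinctCount v) ^ 2 := by
          rw [expect_distinctCount_succ m fun d => likelihoodRatio n e (m + 1) d ^ 2]
          refine Finset.expect_congr rfl fun v _ => ?_
          have hd : distinctCount v ≤ m := distinctCount_le v
          exact likelihoodRatio_step_sq hcard hd (hd.trans_lt (by omega))
      _ ≤ 𝔼 v : Fin m → β, (1 + e ^ 2 * M / (Fintype.card β - M)) *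
            likelihoodRatio n e m (distinctCount v) ^ 2 := by
          refine Finset.expect_le_expect fun v _ => ?_
          have hd : (distinctCount v : ℝ) ≤ M := by
            exact_mod_cast (distinctCount_le v).trans (Nat.le_of_succ_le hm)
          gcongr
      _ ≤ (1 + e ^ 2 * M / (Fintype.card β - M)) ^ (m + 1) := by
          rw [← Finset.mul_expect, pow_succ' _ m]
          gcongr
          exact ih (Nat.le_of_succ_le hm)

lemma expect_likelihoodRatio_sub_one_sq_le {n m : ℕ}
    (hcard : (Fintype.card β : ℝ) = (1 - e) * n) (hm : m < Fintype.card β) :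
    𝔼 v : Fin m → β, (likelihoodRatio n e m (distinctCount v) - 1) ^ 2 ≤
      Real.exp (e ^ 2 * m ^ 2 / (Fintype.card β - m)) - 1 := by
  have : Nonempty β := Fintype.card_pos_iff.1 (m.zero_le.trans_lt hm)
  have hmr : (0 : ℝ) < Fintype.card β - m := sub_pos.2 (by exact_mod_cast hm)
  have hvar : 𝔼 v : Fin m → β, (likelihoodRatio n e m (distinctCount v) - 1) ^ 2 =
      𝔼 v : Fin m → β, likelihoodRatio n e m (distinctCount v) ^ 2 - 1 := by
    simp only [sub_sq, one_pow, mul_one, Finset.expect_add_distrib, Finset.expect_sub_distrib,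
      ← Finset.mul_expect, expect_likelihoodRatio hcard hm.le, Fintype.expect_const]
    ring
  rw [hvar]
  gcongr
  calc 𝔼 v : Fin m → β, likelihoodRatio n e m (distinctCount v) ^ 2
    _ ≤ (1 + e ^ 2 * m / (Fintype.card β - m)) ^ m := expect_likelihoodRatio_sq_le hcard hm le_rfl
    _ ≤ Real.exp (e ^ 2 * m / (Fintype.card β - m)) ^ m := by
        gcongr
        rw [add_comm]
        exact Real.add_one_le_exp _
    _ = Real.exp (e ^ 2 * m ^ 2 / (Fintype.card β - m)) := by
        rw [← Real.exp_nat_mul]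
        ring_nf

end Moments

section Deviation

variable {η : ℝ}

lemma mul_indicator_abs_sub_one_ge_le (hη : 0 < η) {w x : ℝ} (hw : w ≤ 1 + |x - 1|) :
    w * {y : ℝ | η ≤ |y - 1|}.indicator 1 x ≤ (η⁻¹ + η⁻¹ ^ 2) * (x - 1) ^ 2 := by
  by_cases hx : η ≤ |x - 1|
  · have hquot : 1 ≤ η⁻¹ * |x - 1| := by
      rwa [← div_eq_inv_mul, one_le_div hη]
    rw [Set.indicator_of_mem (show x ∈ {y : ℝ | η ≤ |y - 1|} from hx), Pi.one_apply, mul_one]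
    calc w
      _ ≤ 1 + |x - 1| := hw
      _ ≤ (η⁻¹ * |x - 1|) ^ 2 + η⁻¹ * |x - 1| * |x - 1| :=
          add_le_add (one_le_pow₀ hquot) (le_mul_of_one_le_left (abs_nonneg _) hquot)
      _ = (η⁻¹ + η⁻¹ ^ 2) * (x - 1) ^ 2 := by
          rw [← sq_abs (x - 1)]
          ring
  · rw [Set.indicator_of_notMem (show x ∉ {y : ℝ | η ≤ |y - 1|} from hx), mul_zero]
    positivity

variable {β : Type*} [Fintype β] [DecidableEq β] {e : ℝ} {n m : ℕ}

lemma expect_mul_indicator_likelihoodRatio_le (hη : 0 < η)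
    (hcard : (Fintype.card β : ℝ) = (1 - e) * n) (hm : m < Fintype.card β) {w : ℕ → ℝ}
    (hw : ∀ l, w l ≤ 1 + |likelihoodRatio n e m l - 1|) :
    𝔼 v : Fin m → β, w (distinctCount v) *
        {l | η ≤ |likelihoodRatio n e m l - 1|}.indicator 1 (distinctCount v) ≤
      (η⁻¹ + η⁻¹ ^ 2) * (Real.exp (e ^ 2 * m ^ 2 / (Fintype.card β - m)) - 1) := by
  calc _
    _ ≤ 𝔼 v : Fin m → β,
          (η⁻¹ + η⁻¹ ^ 2) * (likelihoodRatio n e m (distinctCount v) - 1) ^ 2 :=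
        Finset.expect_le_expect fun v _ =>
          mul_indicator_abs_sub_one_ge_le hη (hw (distinctCount v))
    _ ≤ _ := by
        rw [← Finset.mul_expect]
        gcongr
        exact expect_likelihoodRatio_sub_one_sq_le hcard hm

lemma expect_indicator_likelihoodRatio_le_of_denominator (hη : 0 < η)
    (hcard : (Fintype.card β : ℝ) = (1 - e) * n) (hm : m < Fintype.card β) :
    𝔼 v : Fin m → β, {l | η ≤ |likelihoodRatio n e m l - 1|}.indicator 1 (distinctCount v) ≤
      (η⁻¹ + η⁻¹ ^ 2) * (Real.exp (e ^ 2 * m ^ 2 / (Fintype.card β - m)) - 1) := by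
  simpa using expect_mul_indicator_likelihoodRatio_le hη hcard hm (w := 1) fun l => by simp

lemma expect_indicator_likelihoodRatio_le_of_numerator {α : Type*} [Fintype α]
    [DecidableEq α] {r : ℕ} (hη : 0 < η) (hrn : (r : ℝ) = (1 - e) * Fintype.card α)
    (hm : m < r) :
    𝔼 v : Fin m → α,
        {l | η ≤ |likelihoodRatio (Fintype.card α) e m l - 1|}.indicator 1 (distinctCount v) ≤
      (η⁻¹ + η⁻¹ ^ 2) * (Real.exp (e ^ 2 * m ^ 2 / (r - m)) - 1) := by
  rw [← Fintype.card_fin r] at hrn hm ⊢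
  rw [expect_distinctCount_eq_expect_likelihoodRatio_mul hrn hm.le]
  exact expect_mul_indicator_likelihoodRatio_le hη hrn hm fun l => by
    linarith [le_abs_self (likelihoodRatio (Fintype.card α) e m l - 1)]

end Deviation

section SetSizeSample

variable {Ω : Type*} [MeasurableSpace Ω] {μ : Measure Ω}

lemma ofReal_expect_indicator_distinctCount {r : ℕ} (hr : 0 < r) (m : ℕ) (B : Set ℕ)
    [DecidablePred (· ∈ B)] :
    ENNReal.ofReal (𝔼 v : Fin m → Fin r, B.indicator 1 (distinctCount v)) =
      (Finset.univ.filter fun v : Fin m → Fin r => distinctCount v ∈ B).card *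
        (r : ENNReal)⁻¹ ^ m := by
  rw [Fintype.expect_eq_sum_div_card, ENNReal.ofReal_div_of_pos (by
    rw [Fintype.card_fun, Fintype.card_fin, Fintype.card_fin]
    positivity)]
  simp [Set.indicator_apply, ENNReal.div_eq_inv_mul, ENNReal.inv_pow, mul_comm]

lemma measure_inter_distinctCount_le {r m : ℕ} (hr : 0 < r) {X : Fin m → Ω → ℕ} {A : Set Ω}
    {w : ENNReal}
    (hX : ∀ v : Fin m → ℕ, μ {ω | ω ∈ A ∧ ∀ i, X i ω = v i} =
      if ∀ i, v i < r then w * (r : ENNReal)⁻¹ ^ m else 0) (B : Set ℕ) :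
    μ {ω | ω ∈ A ∧ distinctCount (fun i => X i ω) ∈ B} ≤
      w * ENNReal.ofReal (𝔼 v : Fin m → Fin r, B.indicator 1 (distinctCount v)) := by
  classical
  set I : Finset (Fin m → Fin r) := Finset.univ.filter fun v => distinctCount v ∈ B with hI
  have hcover : {ω | ω ∈ A ∧ distinctCount (fun i => X i ω) ∈ B} ⊆
      (⋃ v ∈ I, {ω | ω ∈ A ∧ ∀ i, X i ω = (v i : ℕ)}) ∪
        ⋃ v : {v : Fin m → ℕ // ¬ ∀ i, v i < r}, {ω | ω ∈ A ∧ ∀ i, X i ω = v.1 i} := by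
    rintro ω ⟨hA, hB⟩
    by_cases hω : ∀ i, X i ω < r
    · refine Or.inl (Set.mem_biUnion (x := fun i => ⟨X i ω, hω i⟩) ?_ ⟨hA, fun i => rfl⟩)
      rw [Finset.mem_coe, hI, Finset.mem_filter, ← distinctCount_comp Fin.val_injective]
      exact ⟨Finset.mem_univ _, hB⟩
    · exact Or.inr (Set.mem_iUnion.2 ⟨⟨fun i => X i ω, hω⟩, hA, fun i => rfl⟩)
  have hnull : μ (⋃ v : {v : Fin m → ℕ // ¬ ∀ i, v i < r},
      {ω | ω ∈ A ∧ ∀ i, X i ω = v.1 i}) = 0 :=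
    measure_iUnion_null fun v => by rw [hX, if_neg v.2]
  calc μ {ω | ω ∈ A ∧ distinctCount (fun i => X i ω) ∈ B}
    _ ≤ μ (⋃ v ∈ I, {ω | ω ∈ A ∧ ∀ i, X i ω = (v i : ℕ)}) :=
        (measure_mono hcover).trans <| (measure_union_le _ _).trans_eq <| by rw [hnull, add_zero]
    _ ≤ ∑ v ∈ I, μ {ω | ω ∈ A ∧ ∀ i, X i ω = (v i : ℕ)} := measure_biUnion_finset_le _ _
    _ = ∑ _v ∈ I, w * (r : ENNReal)⁻¹ ^ m :=
        Finset.sum_congr rfl fun v _ => by rw [hX, if_pos fun i => (v i).2]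
    _ = w * ENNReal.ofReal (𝔼 v : Fin m → Fin r, B.indicator 1 (distinctCount v)) := by
        rw [Finset.sum_const, nsmul_eq_mul, ofReal_expect_indicator_distinctCount hr]
        ring

/-- The two-point model for set-size discrimination: `N` is `n` or `n'`, each with probability
`1/2`, and given `N = r` the samples `X i` are i.i.d. uniform on `{0, …, r - 1}`. The conditional
law is encoded by the joint masses of `(N, X)`; no measurability of `N` or `X` is assumed. For
`n = n'` the masses sum to `1/2`, so no probability measure `μ` qualifies. -/
structure IsSetSizeSample (μ : Measure Ω) (n n' : ℕ) {m : ℕ} (N : Ω → ℕ) (X : Fin m → Ω → ℕ) :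
    Prop where
  size_eq_or : ∀ ω, N ω = n ∨ N ω = n'
  measure_eq : ∀ r : ℕ, (r = n ∨ r = n') → ∀ v : Fin m → ℕ,
    μ {ω | N ω = r ∧ ∀ i, X i ω = v i} =
      if ∀ i, v i < r then (1 / 2) * ((r : ENNReal))⁻¹ ^ m else 0

theorem IsSetSizeSample.measure_abs_likelihoodRatio_sub_one_ge_le {n n' m : ℕ} {e η : ℝ}
    {N : Ω → ℕ} {X : Fin m → Ω → ℕ} (h : IsSetSizeSample μ n n' N X)
    (hn' : (n' : ℝ) = (1 - e) * n) (hm : m < n') (hη : 0 < η) :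
    μ {ω | η ≤ |likelihoodRatio n e m (distinctCount fun i => X i ω) - 1|} ≤
      ENNReal.ofReal ((η⁻¹ + η⁻¹ ^ 2) * (Real.exp (e ^ 2 * m ^ 2 / (n' - m)) - 1)) := by
  set B : Set ℕ := {l | η ≤ |likelihoodRatio n e m l - 1|}
  set δ : ℝ := (η⁻¹ + η⁻¹ ^ 2) * (Real.exp (e ^ 2 * m ^ 2 / (n' - m)) - 1)
  have hpos' : 0 < n' := m.zero_le.trans_lt hm
  have hpos : 0 < n := pos_of_natCast_eq_mul hpos' hn'
  have hsize : 𝔼 v : Fin m → Fin n, B.indicator 1 (distinctCount v) ≤ δ := by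
    simpa only [Fintype.card_fin] using
      expect_indicator_likelihoodRatio_le_of_numerator (α := Fin n) hη
        (by rwa [Fintype.card_fin]) hm
  have hsize' : 𝔼 v : Fin m → Fin n', B.indicator 1 (distinctCount v) ≤ δ := by
    simpa only [Fintype.card_fin] using
      expect_indicator_likelihoodRatio_le_of_denominator (β := Fin n') hη
        (by rwa [Fintype.card_fin]) (by rwa [Fintype.card_fin])
  calc μ {ω | distinctCount (fun i => X i ω) ∈ B}
    _ ≤ μ ({ω | N ω = n ∧ distinctCount (fun i => X i ω) ∈ B} ∪
          {ω | N ω = n' ∧ distinctCount (fun i => X i ω) ∈ B}) :=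
        measure_mono fun ω hω => (h.size_eq_or ω).imp (⟨·, hω⟩) (⟨·, hω⟩)
    _ ≤ 1 / 2 * ENNReal.ofReal δ + 1 / 2 * ENNReal.ofReal δ := by
        refine (measure_union_le _ _).trans (add_le_add ?_ ?_)
        · refine (measure_inter_distinctCount_le hpos (h.measure_eq n (Or.inl rfl)) B).trans ?_
          gcongr
        · refine (measure_inter_distinctCount_le hpos' (h.measure_eq n' (Or.inr rfl)) B).trans ?_
          gcongr
    _ = ENNReal.ofReal δ := by rw [← add_mul, ENNReal.add_halves, one_mul]

end SetSizeSample

section Asymptotics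

variable {ι : Type*} {F : Filter ι} {n n' m : ι → ℕ} {ε : ι → ℝ} {c : ℝ}

lemma eventually_mul_le_sub_of_tendsto_div (hc : c < 1) (hε : ∀ k, ε k ≤ c)
    (hpos : ∀ k, 0 < n k) (hn' : ∀ k, (n' k : ℝ) = (1 - ε k) * n k)
    (hm : Tendsto (fun k => (m k : ℝ) / n k) F (𝓝 0)) :
    ∀ᶠ k in F, (1 - c) / 2 * n k ≤ (n' k : ℝ) - m k := by
  filter_upwards [hm.eventually_lt_const (show 0 < (1 - c) / 2 by linarith)] with k hk
  have hnk : (0 : ℝ) < n k := Nat.cast_pos.2 (hpos k)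
  have hm_lt : (m k : ℝ) < (1 - c) / 2 * n k := (div_lt_iff₀ hnk).1 hk
  have hn'_ge : (1 - c) * n k ≤ n' k := by
    rw [hn']
    gcongr
    exact hε k
  linarith

lemma tendsto_sq_mul_sq_div_sub (hc : 0 < c) (hpos : ∀ k, 0 < n k)
    (hgap : ∀ᶠ k in F, c * n k ≤ (n' k : ℝ) - m k)
    (hm : Tendsto (fun k => (m k : ℝ) * ε k / Real.sqrt (n k)) F (𝓝 0)) :
    Tendsto (fun k => ε k ^ 2 * (m k : ℝ) ^ 2 / (n' k - m k)) F (𝓝 0) := by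
  have hbound : Tendsto (fun k => c⁻¹ * ((m k : ℝ) * ε k / Real.sqrt (n k)) ^ 2) F (𝓝 0) := by
    simpa using (hm.pow 2).const_mul c⁻¹
  refine squeeze_zero' ?_ ?_ hbound
  · filter_upwards [hgap] with k hk
    have : (0 : ℝ) ≤ n' k - m k := le_trans (by positivity) hk
    positivity
  · filter_upwards [hgap] with k hk
    have hnk : (0 : ℝ) < n k := Nat.cast_pos.2 (hpos k)
    calc ε k ^ 2 * (m k : ℝ) ^ 2 / (n' k - m k)
      _ ≤ ε k ^ 2 * (m k : ℝ) ^ 2 / (c * n k) := by gcongr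
      _ = c⁻¹ * ((m k : ℝ) * ε k / Real.sqrt (n k)) ^ 2 := by
        rw [div_pow, Real.sq_sqrt hnk.le]
        field_simp

end Asymptotics

universe u

theorem set_size_likelihood_ratio_concentration_general {ι : Type*} {F : Filter ι}
    {n n' m : ι → ℕ} {ε : ι → ℝ} {c : ℝ} (hc : c < 1) (hε : ∀ k, ε k ≤ c)
    (hn' : ∀ k, 0 < n' k ∧ (n' k : ℝ) = (1 - ε k) * n k)
    (hm1 : Tendsto (fun k => (m k : ℝ) * ε k / Real.sqrt (n k)) F (𝓝 0))
    (hm2 : Tendsto (fun k => (m k : ℝ) / n k) F (𝓝 0))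
    {S : Set ℝ} (hS : S ∈ 𝓝 1) {p : ENNReal} (hp : p < 1) :
    ∀ᶠ k in F, ∀ (Ω : Type u) (_ : MeasurableSpace Ω) (μ : Measure Ω) (_ : IsProbabilityMeasure μ)
      (N : Ω → ℕ) (X : Fin (m k) → Ω → ℕ), IsSetSizeSample μ (n k) (n' k) N X →
        p ≤ μ {ω | likelihoodRatio (n k) (ε k) (m k) (distinctCount fun i => X i ω) ∈ S} := by
  obtain ⟨η, hη, hball⟩ := Metric.mem_nhds_iff.1 hS
  have hpos : ∀ k, 0 < n k := fun k => pos_of_natCast_eq_mul (hn' k).1 (hn' k).2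
  have hgap := eventually_mul_le_sub_of_tendsto_div hc hε hpos (fun k => (hn' k).2) hm2
  have hfar : Tendsto (fun k => ENNReal.ofReal ((η⁻¹ + η⁻¹ ^ 2) *
      (Real.exp (ε k ^ 2 * (m k : ℝ) ^ 2 / (n' k - m k)) - 1))) F (𝓝 0) := by
    have hcont : Continuous fun t : ℝ =>
        ENNReal.ofReal ((η⁻¹ + η⁻¹ ^ 2) * (Real.exp t - 1)) :=
      ENNReal.continuous_ofReal.comp (by fun_prop)
    exact (hcont.tendsto' 0 0 (by simp)).comp
      (tendsto_sq_mul_sq_div_sub (half_pos (sub_pos.2 hc)) hpos hgap hm1)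
  filter_upwards [hgap, hfar.eventually_le_const (tsub_pos_of_lt hp)]
    with k hgap_k hfar_k Ω _ μ _ N X hX
  have hm_lt : m k < n' k := by
    have : (0 : ℝ) < (1 - c) / 2 * n k :=
      mul_pos (half_pos (sub_pos.2 hc)) (Nat.cast_pos.2 (hpos k))
    exact_mod_cast sub_pos.1 (this.trans_le hgap_k)
  set R : Ω → ℝ := fun ω => likelihoodRatio (n k) (ε k) (m k) (distinctCount fun i => X i ω)
  have hbad : μ {ω | η ≤ |R ω - 1|} ≤ 1 - p :=
    (hX.measure_abs_likelihoodRatio_sub_one_ge_le (hn' k).2 hm_lt hη).trans hfar_k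
  calc p = 1 - (1 - p) := (ENNReal.sub_sub_cancel ENNReal.one_ne_top hp.le).symm
    _ ≤ μ Set.univ - μ {ω | η ≤ |R ω - 1|} := by
        rw [measure_univ]
        gcongr
    _ ≤ μ (Set.univ \ {ω | η ≤ |R ω - 1|}) := le_measure_sdiff
    _ ≤ μ {ω | R ω ∈ S} := measure_mono fun ω hω => hball <| by
        simpa [Real.dist_eq] using hω

/-- (Likelihood-ratio concentration for set-size discrimination.)
For parameter sequences `(n_k, ε_k, m_k)` with `n_k → ∞`, `0 < ε_k < 1/3`,
`(1−ε_k)·n_k = n'_k` a positive integer, `m_k·ε_k/√(n_k) → 0` and `m_k/n_k → 0`,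
the following holds for all `k` large enough.  Let `N` be `n_k` or `n'_k` each with
probability `1/2`; conditionally on `N`, draw `m_k` i.i.d. uniform samples from a set of
size `N`, and let `ℓ` be the number of distinct samples.  Then the likelihood ratio
`R(ℓ) = (1−ε_k)^{m_k−ℓ} · Π_{i=1}^{ℓ−1} (1 − i/n_k)/(1 − i/((1−ε_k)·n_k))` lies in
`[98/100, 100/98]` with probability at least `99/100`. -/
theorem set_size_likelihood_ratio_concentration
    (n n' m : ℕ → ℕ) (ε : ℕ → ℝ)
    (hε : ∀ k, 0 < ε k ∧ ε k < 1 / 3)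
    (hn' : ∀ k, 0 < n' k ∧ ((n' k : ℝ) = (1 - ε k) * n k))
    (hn : Tendsto (fun k => (n k : ℝ)) atTop atTop)
    (hm1 : Tendsto (fun k => (m k : ℝ) * ε k / Real.sqrt (n k)) atTop (nhds 0))
    (hm2 : Tendsto (fun k => (m k : ℝ) / (n k : ℝ)) atTop (nhds 0)) :
    ∀ᶠ k in atTop,
      ∀ (Ω : Type) (_ : MeasurableSpace Ω) (μ : Measure Ω) (_ : IsProbabilityMeasure μ)
        (N : Ω → ℕ) (X : Fin (m k) → Ω → ℕ),
        (∀ ω, N ω = n k ∨ N ω = n' k) →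
        (∀ r : ℕ, (r = n k ∨ r = n' k) → ∀ v : Fin (m k) → ℕ,
          μ {ω | N ω = r ∧ ∀ i, X i ω = v i} =
            if ∀ i, v i < r then (1 / 2) * ((r : ENNReal))⁻¹ ^ (m k) else 0) →
        ∀ R : ℕ → ℝ,
          (∀ l : ℕ, R l = (1 - ε k) ^ (m k - l) *
            ∏ i ∈ Finset.Ico 1 l,
              (1 - (i : ℝ) / (n k)) / (1 - (i : ℝ) / ((1 - ε k) * n k))) →
        ∀ ℓ : Ω → ℕ,
          (∀ ω, ℓ ω = (Finset.univ.image (fun i => X i ω)).card) →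
        (99 / 100 : ENNReal) ≤
          μ {ω | 98 / 100 ≤ R (ℓ ω) ∧ R (ℓ ω) ≤ 100 / 98} := by
  have hS : Set.Icc (98 / 100 : ℝ) (100 / 98) ∈ 𝓝 1 := Icc_mem_nhds (by norm_num) (by norm_num)
  have hp : (99 / 100 : ENNReal) < 1 := ENNReal.div_lt_of_lt_mul (by norm_num)
  filter_upwards [set_size_likelihood_ratio_concentration_general (by norm_num)
    (fun k => (hε k).2.le) hn' hm1 hm2 hS hp] with k hk Ω _ μ hμ N X hN hX R hR ℓ hℓ
  obtain rfl : R = likelihoodRatio (n k) (ε k) (m k) := funext hR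
  obtain rfl : ℓ = fun ω => distinctCount fun i => X i ω := funext hℓ
  exact hk Ω _ μ hμ N X ⟨hN, hX⟩
end
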